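/- Assume N ≥ 1 and σ > 0 with 2σ+2 < 2** (2** = 2N/(N-4) if N ≥ 5, 2** = ∞ if N ≤ 4). Let I = inf{K(u) : u ∈ H²(ℝ^N), ‖u‖_{L^{2σ+2}} = 1}, where K(u) = ∫_{ℝ^N}|Δu|²dx + ∫_{ℝ^N}|u|²dx. Then: (i) I > 0, and for any sequence (u_n) ⊂ H²(ℝ^N) with ‖u_n‖_{L^{2σ+2}} → 1 and K(u_n) → I there exist a subsequence (u_{n_k}), points (x_k) ⊂ ℝ^N, and a minimizer u of K on {‖u‖_{L^{2σ+2}} = 1} such that u_{n_k}(·+x_k) → u strongly in H²(ℝ^N); (ii) every minimizer of K on {‖u‖_{L^{2σ+2}} = 1} is an optimal function for the Gagliardo–Nirenberg–Sobolev inequality, i.e. it realizes the supremum B(N,σ) = sup{ ‖u‖_{L^{2σ+2}}^{2σ+2} / (‖Δu‖_{L²}^{Nσ/2}‖u‖_{L²}^{2+2σ-Nσ/2}) : u ∈ H²(ℝ^N), u ≠ 0 }. -/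

import Mathlib

open MeasureTheory Filter Topology

noncomputable section

abbrev Esp (N : ℕ) := EuclideanSpace ℝ (Fin N)

/-- Smooth compactly supported test functions. -/
def TestFun {N : ℕ} (φ : Esp N → ℂ) : Prop :=
  ContDiff ℝ (⊤ : ℕ∞) φ ∧ HasCompactSupport φ

/-- Partial derivative in the `i`-th coordinate direction. -/
def pderivC {N : ℕ} (i : Fin N) (φ : Esp N → ℂ) : Esp N → ℂ :=
  fun x => fderiv ℝ φ x (EuclideanSpace.single i (1 : ℝ))

/-- The Laplacian of a (smooth) function. -/
def lapC {N : ℕ} (φ : Esp N → ℂ) : Esp N → ℂ :=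
  fun x => ∑ i, pderivC i (pderivC i φ) x

/-- `v` is the weak `i`-th partial derivative of `u`. -/
def IsWeakPDeriv {N : ℕ} (u : Esp N → ℂ) (i : Fin N) (v : Esp N → ℂ) : Prop :=
  ∀ φ : Esp N → ℂ, TestFun φ → ∫ x, u x * pderivC i φ x = - ∫ x, v x * φ x

/-- `v` is the weak Laplacian of `u`. -/
def IsWeakLap {N : ℕ} (u v : Esp N → ℂ) : Prop :=
  ∀ φ : Esp N → ℂ, TestFun φ → ∫ x, u x * lapC φ x = ∫ x, v x * φ x

/-- An element of the Sobolev space `H²(ℝ^N, ℂ)`: an `L²` function together with its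
weak partial derivatives and its weak Laplacian, all in `L²`. -/
structure H2 (N : ℕ) where
  u : Esp N → ℂ
  grad : Fin N → Esp N → ℂ
  lapl : Esp N → ℂ
  u_mem : MemLp u 2 (volume : Measure (Esp N))
  grad_mem : ∀ i, MemLp (grad i) 2 (volume : Measure (Esp N))
  lapl_mem : MemLp lapl 2 (volume : Measure (Esp N))
  grad_spec : ∀ i, IsWeakPDeriv u i (grad i)
  lapl_spec : IsWeakLap u lapl

namespace H2

variable {N : ℕ}

/-- `∫ |u|²`. -/
def massSq (U : H2 N) : ℝ := ∫ x, ‖U.u x‖ ^ 2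

/-- `∫ |∇u|²`. -/
def gradSq (U : H2 N) : ℝ := ∑ i, ∫ x, ‖U.grad i x‖ ^ 2

/-- `∫ |Δu|²`. -/
def lapSq (U : H2 N) : ℝ := ∫ x, ‖U.lapl x‖ ^ 2

/-- `∫ |u|^{2σ+2}`. -/
def pPow (σ : ℝ) (U : H2 N) : ℝ := ∫ x, ‖U.u x‖ ^ (2 * σ + 2)

/-- The energy `E(u) = ∫|Δu|² - 2∫|∇u|² - (1/(σ+1))∫|u|^{2σ+2}`. -/
def energy (σ : ℝ) (U : H2 N) : ℝ :=
  U.lapSq - 2 * U.gradSq - (1 / (σ + 1)) * U.pPow σ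

/-- The square of the `H²` norm. -/
def h2NormSq (U : H2 N) : ℝ := U.massSq + U.gradSq + U.lapSq

/-- `u` does not vanish almost everywhere. -/
def Nontriv (U : H2 N) : Prop := ¬ (U.u =ᵐ[(volume : Measure (Esp N))] 0)

end H2

/-- `E_min(m) = inf {E(u) : u ∈ H², ∫|u|² = m}`, with values in `EReal`. -/
def EminE (N : ℕ) (σ m : ℝ) : EReal :=
  ⨅ (U : H2 N) (_ : U.massSq = m), ((U.energy σ : ℝ) : EReal)

/-- The `L^p` norm (as a real number) of a function on `ℝ^N`. -/
def rLp {N : ℕ} (p : ℝ) (f : Esp N → ℂ) : ℝ :=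
  (eLpNorm f (ENNReal.ofReal p) (volume : Measure (Esp N))).toReal


/-- The best constant `B(N,σ)` in the Gagliardo–Nirenberg–Sobolev inequality
`‖u‖_{L^{2σ+2}}^{2σ+2} ≤ B ‖Δu‖_{L²}^{Nσ/2} ‖u‖_{L²}^{2+2σ-Nσ/2}`. -/
def GNconst (N : ℕ) (σ : ℝ) : ℝ :=
  sSup {r : ℝ | ∃ U : H2 N, U.Nontriv ∧
    r = U.pPow σ /
      (rLp 2 U.lapl ^ ((N : ℝ) * σ / 2) * rLp 2 U.u ^ (2 + 2 * σ - (N : ℝ) * σ / 2))}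

/-- `k* = (σ+1)^{1/σ} B(N,σ)^{-1/σ}`. -/
def kstar (N : ℕ) (σ : ℝ) : ℝ := (σ + 1) ^ (1 / σ) * GNconst N σ ^ (-(1 / σ))

/-- Strong `H²` convergence of `v k (· + xs k)` to `U`. -/
def H2TendstoTrans {N : ℕ} (v : ℕ → H2 N) (xs : ℕ → Esp N) (U : H2 N) : Prop :=
  Tendsto (fun k => eLpNorm (fun x => (v k).u (x + xs k) - U.u x) 2
      (volume : Measure (Esp N))) atTop (nhds 0) ∧
  (∀ i, Tendsto (fun k => eLpNorm (fun x => (v k).grad i (x + xs k) - U.grad i x) 2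
      (volume : Measure (Esp N))) atTop (nhds 0)) ∧
  Tendsto (fun k => eLpNorm (fun x => (v k).lapl (x + xs k) - U.lapl x) 2
      (volume : Measure (Esp N))) atTop (nhds 0)

/-- `u` is a weak (`H^{-2}`) solution of `Δ²u + 2Δu + (1+c)u - |u|^{2σ}u = 0`. -/
def SolvesSW {N : ℕ} (σ c : ℝ) (U : H2 N) : Prop :=
  ∀ φ : Esp N → ℂ, TestFun φ →
    (∫ x, U.lapl x * lapC φ x) + 2 * (∫ x, U.lapl x * φ x) +
        ((1 + c : ℝ) : ℂ) * (∫ x, U.u x * φ x) -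
        (∫ x, ((‖U.u x‖ ^ (2 * σ) : ℝ) : ℂ) * U.u x * φ x) = 0

/-- `T_c(u) = ∫|Δu|² - 2∫|∇u|² + (1+c)∫|u|²`. -/
def Tfun {N : ℕ} (c : ℝ) (U : H2 N) : ℝ := U.lapSq - 2 * U.gradSq + (1 + c) * U.massSq

/-- `t(c) = inf {T_c(u) : ∫|u|^{2σ+2} = 1}`. -/
def tmin (N : ℕ) (σ c : ℝ) : ℝ := sInf {r : ℝ | ∃ U : H2 N, U.pPow σ = 1 ∧ r = Tfun c U}

/-- The action `S_c(u) = E(u) + (1+c)‖u‖_{L²}² = T_c(u) - (1/(σ+1))∫|u|^{2σ+2}`. -/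
def action {N : ℕ} (σ c : ℝ) (U : H2 N) : ℝ := U.energy σ + (1 + c) * U.massSq

/-- `K(u) = ∫|Δu|² + ∫|u|²`. -/
def Kfun {N : ℕ} (U : H2 N) : ℝ := U.lapSq + U.massSq

/-- `I = inf {K(u) : ‖u‖_{L^{2σ+2}} = 1}`. -/
def Iconst (N : ℕ) (σ : ℝ) : ℝ :=
  sInf {r : ℝ | ∃ U : H2 N, rLp (2 * σ + 2) U.u = 1 ∧ r = Kfun U}



section
open scoped SchwartzMap LineDeriv FourierTransform ContDiff

lemma pderivC_schwartz {N : ℕ} (ψ : 𝓢(Esp N, ℂ)) (i : Fin N) :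
    pderivC i (ψ : Esp N → ℂ) = (∂_{EuclideanSpace.single i (1:ℝ)} ψ : 𝓢(Esp N, ℂ)) := by
  funext x
  rw [SchwartzMap.lineDerivOp_apply_eq_fderiv]; rfl

lemma TestFun.memLp {N : ℕ} {φ : Esp N → ℂ} (h : TestFun φ) : MemLp φ 2 (volume : Measure (Esp N)) :=
  h.1.continuous.memLp_of_hasCompactSupport h.2

lemma TestFun.pd {N : ℕ} {φ : Esp N → ℂ} (h : TestFun φ) (i : Fin N) : TestFun (pderivC i φ) := by
  have h1 : ContDiff ℝ ∞ (fderiv ℝ φ) := h.1.fderiv_right (by simp)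
  refine ⟨h1.clm_apply contDiff_const, ?_⟩
  exact (h.2.fderiv (𝕜 := ℝ)).comp_left (g := fun L : Esp N →L[ℝ] ℂ => L (EuclideanSpace.single i (1:ℝ))) rfl

/-- products of `L²` functions are integrable -/
lemma int_mul_L2 {N : ℕ} {f g : Esp N → ℂ} (hf : MemLp f 2 (volume : Measure (Esp N)))
    (hg : MemLp g 2 (volume : Measure (Esp N))) : Integrable (fun x => f x * g x) := 
  hf.integrable_mul hg

lemma schwartz_approx {N : ℕ} (ψ : 𝓢(Esp N, ℂ)) :
    ∃ φ : ℕ → Esp N → ℂ, (∀ n, TestFun (φ n)) ∧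
      ∀ f : Esp N → ℂ, MemLp f 2 (volume : Measure (Esp N)) →
        Tendsto (fun n => ∫ x, f x * φ n x) atTop (𝓝 (∫ x, f x * ψ x)) ∧
        ∀ i, Tendsto (fun n => ∫ x, f x * pderivC i (φ n) x) atTop
          (𝓝 (∫ x, f x * pderivC i ψ x)) := by
  let χ : ContDiffBump (0 : Esp N) := ⟨1, 2, by norm_num, by norm_num⟩
  have hχs : ContDiff ℝ ∞ (χ : Esp N → ℝ) := χ.contDiff
  have hχc : HasCompactSupport (χ : Esp N → ℝ) := χ.hasCompactSupport
  have hχ'c : Continuous (fderiv ℝ (χ : Esp N → ℝ)) := hχs.continuous_fderiv (by simp)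
  obtain ⟨C, hC⟩ := hχ'c.bounded_above_of_compact_support (hχc.fderiv (𝕜 := ℝ))
  have hC0 : 0 ≤ C := (norm_nonneg _).trans (hC 0)
  let r : ℕ → ℝ := fun n => ((n:ℝ)+1)⁻¹
  have hr0 : ∀ n, 0 < r n := fun n => by positivity
  have hr1 : ∀ n, r n ≤ 1 := fun n => inv_le_one_of_one_le₀ (by simp)
  have hr : Tendsto r atTop (𝓝 0) := by
    simpa [r] using tendsto_one_div_add_atTop_nhds_zero_nat (𝕜 := ℝ)
  let η : ℕ → Esp N → ℝ := fun n x => χ (r n • x)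
  have hηs : ∀ n, ContDiff ℝ ∞ (η n) := fun n => hχs.comp (contDiff_const_smul _)
  have hηc : ∀ n, HasCompactSupport (η n) := fun n => hχc.comp_smul (hr0 n).ne'
  let φ : ℕ → Esp N → ℂ := fun n x => (η n x : ℂ) * ψ x
  have hφ : ∀ n, TestFun (φ n) := by
    intro n
    refine ⟨?_, ?_⟩
    · exact (Complex.ofRealCLM.contDiff.comp (hηs n)).mul (ψ.smooth _)
    · exact ((hηc n).comp_left (g := fun t : ℝ => (t:ℂ)) (by simp)).mul_right
  have hη1 : ∀ x, Tendsto (fun n => η n x) atTop (𝓝 1) := by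
    intro x
    have : Tendsto (fun n => r n • x) atTop (𝓝 ((0:ℝ) • x)) := hr.smul_const x
    have h2 := (hχs.continuous.tendsto ((0:ℝ) • x)).comp this
    have h3 : χ ((0:ℝ) • x) = 1 := by
      rw [zero_smul]; exact χ.one_of_mem_closedBall (by simp [χ])
    rw [h3] at h2; exact h2
  have hηb : ∀ n x, |η n x| ≤ 1 := fun n x => by
    rw [abs_of_nonneg χ.nonneg]; exact χ.le_one
  have hder : ∀ n i x, pderivC i (φ n) x = (η n x : ℂ) * pderivC i ψ x +
      ((r n * fderiv ℝ χ (r n • x) (EuclideanSpace.single i 1) : ℝ) : ℂ) * ψ x := by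
    intro n i x
    have h1 : HasFDerivAt (η n) (r n • fderiv ℝ χ (r n • x)) x := by
      have ha : HasFDerivAt (χ : Esp N → ℝ) (fderiv ℝ χ (r n • x)) (r n • x) :=
        (hχs.differentiable (by simp) _).hasFDerivAt
      have hb : HasFDerivAt (fun x : Esp N => r n • x) (r n • ContinuousLinearMap.id ℝ (Esp N)) x :=
        (hasFDerivAt_id x).const_smul (r n)
      have := ha.comp x hb
      refine this.congr_fderiv ?_
      ext v; simp
    have h2 : HasFDerivAt (fun x => (η n x : ℂ)) (Complex.ofRealCLM.comp (r n • fderiv ℝ χ (r n • x))) x :=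
      Complex.ofRealCLM.hasFDerivAt.comp x h1
    have h3 : HasFDerivAt (ψ : Esp N → ℂ) (fderiv ℝ ψ x) x := ψ.differentiableAt.hasFDerivAt
    have h4 := (h2.mul h3).fderiv
    change fderiv ℝ (fun x => (η n x : ℂ) * ψ x) x _ = _
    have h5 : fderiv ℝ (fun x => (η n x : ℂ) * ψ x) x = _ := h4
    rw [h5]
    simp [pderivC]; ring
  refine ⟨φ, hφ, fun f hf => ⟨?_, fun i => ?_⟩⟩
  · have hψ2 : MemLp ψ 2 (volume : Measure (Esp N)) := ψ.memLp 2 _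
    refine tendsto_integral_of_dominated_convergence (fun x => ‖f x * ψ x‖) (fun n => ?_)
      (int_mul_L2 hf hψ2).norm (fun n => ?_) ?_
    · exact (int_mul_L2 hf (hφ n).memLp).aestronglyMeasurable
    · refine Eventually.of_forall fun x => ?_
      simp only [φ, norm_mul, Complex.norm_real, Real.norm_eq_abs]
      gcongr
      exact mul_le_of_le_one_left (norm_nonneg _) (hηb n x)
    · refine Eventually.of_forall fun x => ?_
      have := ((Complex.continuous_ofReal.tendsto _).comp (hη1 x)).mul_const (ψ x)
      simpa using this.const_mul (f x)
  · have hψ2 : MemLp ψ 2 (volume : Measure (Esp N)) := ψ.memLp 2 _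
    have hψ3 : MemLp (pderivC i ψ) 2 (volume : Measure (Esp N)) := by
      rw [pderivC_schwartz]; exact SchwartzMap.memLp _ 2 _
    refine tendsto_integral_of_dominated_convergence
      (fun x => ‖f x * pderivC i ψ x‖ + C * ‖f x * ψ x‖) (fun n => ?_)
      ((int_mul_L2 hf hψ3).norm.add ((int_mul_L2 hf hψ2).norm.const_mul C)) (fun n => ?_) ?_
    · exact (int_mul_L2 hf ((hφ n).pd i).memLp).aestronglyMeasurable
    · refine Eventually.of_forall fun x => ?_
      rw [hder, mul_add]
      refine (norm_add_le _ _).trans ?_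
      simp only [norm_mul, Complex.norm_real, Real.norm_eq_abs]
      have h1 : |fderiv ℝ χ (r n • x) (EuclideanSpace.single i 1)| ≤ C := by
        have := (fderiv ℝ χ (r n • x)).le_opNorm (EuclideanSpace.single i 1)
        simp only [Real.norm_eq_abs, PiLp.norm_single, abs_one, mul_one] at this
        exact this.trans (hC _)
      have h2 : |r n * fderiv ℝ χ (r n • x) (EuclideanSpace.single i 1)| ≤ C := by
        rw [abs_mul, abs_of_pos (hr0 n)]
        calc _ ≤ 1 * C := by gcongr; exact hr1 n
          _ = C := one_mul _
      have h3 := hηb n x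
      have e1 : ‖f x‖ * (|η n x| * ‖pderivC i ψ x‖) ≤ ‖f x‖ * ‖pderivC i ψ x‖ := by
        gcongr; exact mul_le_of_le_one_left (norm_nonneg _) h3
      have e2 : ‖f x‖ * (|r n * fderiv ℝ χ (r n • x) (EuclideanSpace.single i 1)| * ‖ψ x‖)
          ≤ C * (‖f x‖ * ‖ψ x‖) := by
        calc _ ≤ ‖f x‖ * (C * ‖ψ x‖) := by gcongr
          _ = _ := by ring
      rw [abs_mul] at e2
      exact add_le_add e1 e2
    · refine Eventually.of_forall fun x => ?_
      simp only [hder]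
      have t1 := ((Complex.continuous_ofReal.tendsto _).comp (hη1 x)).mul_const (pderivC i ψ x)
      have t2 : Tendsto (fun n => r n * fderiv ℝ χ (r n • x) (EuclideanSpace.single i 1)) atTop (𝓝 0) := by
        refine squeeze_zero_norm (a := fun n => r n * C) (fun n => ?_) (by simpa using hr.mul_const C)
        rw [norm_mul, Real.norm_of_nonneg (hr0 n).le]
        have := (fderiv ℝ χ (r n • x)).le_opNorm (EuclideanSpace.single i 1)
        simp only [PiLp.norm_single, norm_one, mul_one] at this
        have := this.trans (hC _)
        have h0 := hr0 n
        gcongr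
      have t3 := ((Complex.continuous_ofReal.tendsto _).comp t2).mul_const (ψ x)
      simpa using (t1.add t3).const_mul (f x)

lemma weakPDeriv_schwartz {N : ℕ} {u v : Esp N → ℂ} {i : Fin N}
    (hu : MemLp u 2 (volume : Measure (Esp N))) (hv : MemLp v 2 (volume : Measure (Esp N)))
    (h : IsWeakPDeriv u i v) (ψ : 𝓢(Esp N, ℂ)) :
    ∫ x, u x * pderivC i ψ x = - ∫ x, v x * ψ x := by
  obtain ⟨φ, hφ, hlim⟩ := schwartz_approx ψ
  refine tendsto_nhds_unique ((hlim u hu).2 i) ?_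
  have := (hlim v hv).1.neg
  refine this.congr fun n => (h _ (hφ n)).symm

lemma weakLap_schwartz {N : ℕ} (U : H2 N) (ψ : 𝓢(Esp N, ℂ)) :
    - ∑ i, ∫ x, U.grad i x * pderivC i ψ x = ∫ x, U.lapl x * ψ x := by
  obtain ⟨φ, hφ, hlim⟩ := schwartz_approx ψ
  have h1 : Tendsto (fun n => - ∑ i, ∫ x, U.grad i x * pderivC i (φ n) x) atTop
      (𝓝 (- ∑ i, ∫ x, U.grad i x * pderivC i ψ x)) :=
    (tendsto_finsetSum _ fun i _ => (hlim _ (U.grad_mem i)).2 i).neg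
  refine tendsto_nhds_unique h1 ((hlim _ U.lapl_mem).1.congr fun n => ?_)
  rw [← U.lapl_spec _ (hφ n), ← Finset.sum_neg_distrib]
  have : ∀ x, U.u x * lapC (φ n) x = ∑ i, U.u x * pderivC i (pderivC i (φ n)) x := fun x => by
    simp only [lapC, Finset.mul_sum]
  simp only [this]
  rw [integral_finsetSum _ fun i _ => int_mul_L2 U.u_mem (((hφ n).pd i).pd i).memLp]
  refine Finset.sum_congr rfl fun i _ => ?_
  rw [U.grad_spec i _ ((hφ n).pd i)]
end

section
open scoped SchwartzMap LineDeriv FourierTransform ContDiff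

lemma ae_eq_of_schwartz {N : ℕ} {f g : Esp N → ℂ} (hf : LocallyIntegrable f)
    (hg : LocallyIntegrable g)
    (h : ∀ ψ : 𝓢(Esp N, ℂ), ∫ x, ψ x * f x = ∫ x, ψ x * g x) : f =ᵐ[volume] g := by
  refine ae_eq_of_integral_contDiff_smul_eq hf hg fun k hk hkc => ?_
  have hg₁ : HasCompactSupport (Complex.ofRealCLM ∘ k) := hkc.comp_left rfl
  have hg₂ : ContDiff ℝ ∞ (Complex.ofRealCLM ∘ k) := by fun_prop
  have := h (hg₁.toSchwartzMap hg₂)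
  simpa using this

/-- The Fourier transform of an `L²` function (as an element of `L²`). -/
def FT {N : ℕ} {f : Esp N → ℂ} (hf : MemLp f 2 (volume : Measure (Esp N))) :
    Lp ℂ 2 (volume : Measure (Esp N)) := 𝓕 (hf.toLp f)

lemma FT_schwartz {N : ℕ} {f : Esp N → ℂ} (hf : MemLp f 2 (volume : Measure (Esp N)))
    (ψ : 𝓢(Esp N, ℂ)) : ∫ x, ψ x * FT hf x = ∫ x, (𝓕 ψ : 𝓢(Esp N, ℂ)) x * f x := by
  have h := congrArg (fun T => T ψ) (Lp.fourier_toTemperedDistribution_eq (hf.toLp f))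
  simp only [TemperedDistribution.fourier_apply, Lp.toTemperedDistribution_apply, smul_eq_mul] at h
  rw [FT, ← h]
  refine integral_congr_ae ?_
  filter_upwards [hf.coeFn_toLp] with x hx
  rw [hx]

lemma mul_coord_L2_locInt {N : ℕ} {f : Esp N → ℂ} (hf : MemLp f 2 (volume : Measure (Esp N)))
    (i : Fin N) : LocallyIntegrable (fun x => (2 * Real.pi * Complex.I * (x i : ℂ)) * f x) := by
  have h1 : LocallyIntegrable f := hf.locallyIntegrable (by norm_num)
  rw [← locallyIntegrableOn_univ] at h1 ⊢
  refine h1.continuousOn_mul ?_ isOpen_univ.isLocallyClosed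
  fun_prop

lemma FT_weakPDeriv {N : ℕ} {u v : Esp N → ℂ} {i : Fin N}
    (hu : MemLp u 2 (volume : Measure (Esp N))) (hv : MemLp v 2 (volume : Measure (Esp N)))
    (h : ∀ ψ : 𝓢(Esp N, ℂ), ∫ x, u x * pderivC i ψ x = - ∫ x, v x * ψ x) :
    FT hv =ᵐ[volume] fun ξ => (2 * Real.pi * Complex.I * (ξ i : ℂ)) * FT hu ξ := by
  refine ae_eq_of_schwartz ((Lp.memLp _).locallyIntegrable (by norm_num))
    (mul_coord_L2_locInt (Lp.memLp _) i) fun ψ => ?_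
  rw [FT_schwartz]
  have h1 := h (𝓕 ψ)
  rw [pderivC_schwartz, SchwartzMap.lineDerivOp_fourier_eq] at h1
  have h2 : ∫ x, (𝓕 ψ : 𝓢(Esp N, ℂ)) x * v x = ∫ x, v x * (𝓕 ψ : 𝓢(Esp N, ℂ)) x := by
    simp only [mul_comm]
  rw [h2, ← neg_eq_iff_eq_neg.mpr h1]
  have h3 := FT_schwartz hu (-(2 * Real.pi * Complex.I) • SchwartzMap.smulLeftCLM ℂ (inner ℝ · (EuclideanSpace.single i (1:ℝ))) ψ)
  simp only [mul_comm (u _)]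
  rw [← h3, ← integral_neg]
  congr 1; funext x
  have ht : (fun y : Esp N => inner ℝ y (EuclideanSpace.single i (1:ℝ))).HasTemperateGrowth := by fun_prop
  have ht' : (fun y : Esp N => y i).HasTemperateGrowth := by simpa [EuclideanSpace.inner_single_right] using ht
  simp [SchwartzMap.smulLeftCLM_apply_apply ht', EuclideanSpace.inner_single_right]
  ring

lemma FT_grad {N : ℕ} (U : H2 N) (i : Fin N) :
    FT (U.grad_mem i) =ᵐ[volume] fun ξ => (2 * Real.pi * Complex.I * (ξ i : ℂ)) * FT U.u_mem ξ :=
  FT_weakPDeriv _ _ (weakPDeriv_schwartz U.u_mem (U.grad_mem i) (U.grad_spec i))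

lemma FT_lapl {N : ℕ} (U : H2 N) :
    FT U.lapl_mem =ᵐ[volume] fun ξ => -((4 * Real.pi ^ 2 * ‖ξ‖ ^ 2 : ℝ) : ℂ) * FT U.u_mem ξ := by
  have key : FT U.lapl_mem =ᵐ[volume] fun ξ => ∑ i, (2 * Real.pi * Complex.I * (ξ i : ℂ)) * FT (U.grad_mem i) ξ := by
    refine ae_eq_of_schwartz ((Lp.memLp _).locallyIntegrable (by norm_num)) ?_ fun ψ => ?_
    · exact locallyIntegrable_finsetSum _ fun i _ => mul_coord_L2_locInt (Lp.memLp _) i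
    · rw [FT_schwartz]
      have h1 := weakLap_schwartz U (𝓕 ψ)
      have h2 : ∫ x, (𝓕 ψ : 𝓢(Esp N, ℂ)) x * U.lapl x = ∫ x, U.lapl x * (𝓕 ψ : 𝓢(Esp N, ℂ)) x := by
        simp only [mul_comm]
      rw [h2, ← h1, ← Finset.sum_neg_distrib]
      have e : ∀ i, - ∫ x, U.grad i x * pderivC i (𝓕 ψ : 𝓢(Esp N, ℂ)) x =
          ∫ x, ψ x * ((2 * Real.pi * Complex.I * (x i : ℂ)) * FT (U.grad_mem i) x) ∧
          Integrable (fun x => ψ x * ((2 * Real.pi * Complex.I * (x i : ℂ)) * FT (U.grad_mem i) x)) := by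
        intro i
        have ht : (fun y : Esp N => inner ℝ y (EuclideanSpace.single i (1:ℝ))).HasTemperateGrowth := by fun_prop
        have ht' : (fun y : Esp N => y i).HasTemperateGrowth := by simpa [EuclideanSpace.inner_single_right] using ht
        let Ψ := (-(2 * Real.pi * Complex.I) • SchwartzMap.smulLeftCLM ℂ (inner ℝ · (EuclideanSpace.single i (1:ℝ))) ψ)
        have e0 : ∀ x, -(Ψ x * FT (U.grad_mem i) x) = ψ x * ((2 * Real.pi * Complex.I * (x i : ℂ)) * FT (U.grad_mem i) x) := by
          intro x
          simp [Ψ, SchwartzMap.smulLeftCLM_apply_apply ht', EuclideanSpace.inner_single_right]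
          ring
        have h3 := FT_schwartz (U.grad_mem i) Ψ
        constructor
        · rw [pderivC_schwartz, SchwartzMap.lineDerivOp_fourier_eq]
          simp only [mul_comm (U.grad i _)]
          rw [← h3, ← integral_neg]
          congr 1; funext x; exact e0 x
        · refine (int_mul_L2 (Ψ.memLp 2 _) (Lp.memLp (FT (U.grad_mem i)))).neg.congr ?_
          exact Eventually.of_forall e0
      rw [Finset.sum_congr rfl fun i _ => (e i).1]
      rw [← integral_finsetSum _ fun i _ => (e i).2]
      simp only [Finset.mul_sum]
  have h2 : ∀ᵐ ξ : Esp N, ∀ i, FT (U.grad_mem i) ξ = (2 * Real.pi * Complex.I * (ξ i : ℂ)) * FT U.u_mem ξ :=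
    ae_all_iff.2 fun i => FT_grad U i
  filter_upwards [key, h2] with ξ h h'
  rw [h, EuclideanSpace.norm_sq_eq]
  simp only [h', Finset.mul_sum, ← mul_assoc]
  push_cast
  rw [← Finset.sum_mul, ← Finset.sum_neg_distrib]
  congr 1
  refine Finset.sum_congr rfl fun i _ => ?_
  have hs : ((‖ξ i‖ : ℝ) : ℂ) ^ 2 = (ξ i : ℂ) ^ 2 := by
    rw [Real.norm_eq_abs, ← Complex.ofReal_pow, sq_abs, Complex.ofReal_pow]
  rw [hs]
  push_cast
  linear_combination (4 * (Real.pi:ℂ)^2 * (ξ i:ℂ)^2) * Complex.I_sq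
end

section
open scoped SchwartzMap LineDeriv FourierTransform ContDiff ENNReal NNReal

lemma fourierInv_norm_le {N : ℕ} (g : Esp N → ℂ) (x : Esp N) : ‖𝓕⁻ g x‖ ≤ ∫ ξ, ‖g ξ‖ :=
  VectorFourier.norm_fourierIntegral_le_integral_norm _ _ _ _ _

lemma fourierInv_cont {N : ℕ} {g : Esp N → ℂ} (h1 : Integrable g) : Continuous (𝓕⁻ g) := by
  refine VectorFourier.fourierIntegral_continuous Real.continuous_fourierChar ?_ h1
  simp only [LinearMap.neg_apply]
  exact continuous_inner.neg

lemma fourierInv_compat {N : ℕ} {g : Esp N → ℂ} (h1 : Integrable g)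
    (h2 : MemLp g 2 (volume : Measure (Esp N))) :
    (𝓕⁻ (h2.toLp g) : Lp ℂ 2 (volume : Measure (Esp N))) =ᵐ[volume] (𝓕⁻ g : Esp N → ℂ) := by
  refine ae_eq_of_schwartz ((Lp.memLp _).locallyIntegrable (by norm_num))
    (fourierInv_cont h1).locallyIntegrable fun ψ => ?_
  have h := congrArg (fun T => T ψ) (Lp.fourierInv_toTemperedDistribution_eq (h2.toLp g))
  simp only [TemperedDistribution.fourierInv_apply, Lp.toTemperedDistribution_apply, smul_eq_mul] at h
  rw [← h]
  have e1 : ∫ x, (𝓕⁻ ψ : 𝓢(Esp N, ℂ)) x * (h2.toLp g) x = ∫ x, (𝓕⁻ ψ : 𝓢(Esp N, ℂ)) x * g x := by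
    refine integral_congr_ae ?_
    filter_upwards [h2.coeFn_toLp] with x hx
    rw [hx]
  rw [e1, SchwartzMap.fourierInv_coe]
  have hc : Continuous fun p : Esp N × Esp N => (-innerₗ (Esp N)) p.1 p.2 := by
    simp only [LinearMap.neg_apply]
    exact continuous_inner.neg
  have := VectorFourier.integral_fourierIntegral_smul_eq_flip (μ := volume) (ν := volume)
    (L := -innerₗ (Esp N)) Real.continuous_fourierChar hc ψ.integrable h1
  have hflip : (-innerₗ (Esp N)).flip = -innerₗ (Esp N) := by
    ext x y; simp [real_inner_comm]
  rw [hflip] at this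
  exact this

lemma FT_inv_norm {N : ℕ} (F : Lp ℂ 2 (volume : Measure (Esp N))) : ‖(𝓕⁻ F : Lp ℂ 2 (volume : Measure (Esp N)))‖ = ‖F‖ := by
  rw [← Lp.norm_fourier_eq (𝓕⁻ F), FourierTransform.fourier_fourierInv_eq]

/-- interpolation between `L²` and `L^∞` -/
lemma interp_sup {α : Type*} [MeasurableSpace α] {μ : Measure α} {g : α → ℂ} {M : ℝ≥0} {p : ℝ} (hp : 2 < p)
    (hM : ∀ᵐ x ∂μ, ‖g x‖ₑ ≤ M) :
    eLpNorm g (ENNReal.ofReal p) μ ≤ (M : ℝ≥0∞) ^ (1 - 2 / p) * eLpNorm g 2 μ ^ (2 / p) := by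
  have hp0 : 0 < p := by linarith
  have h1 : ENNReal.ofReal p ≠ 0 := by simpa using hp0
  rw [eLpNorm_eq_lintegral_rpow_enorm_toReal h1 ENNReal.ofReal_ne_top,
    eLpNorm_eq_lintegral_rpow_enorm_toReal two_ne_zero ENNReal.ofNat_ne_top,
    ENNReal.toReal_ofReal hp0.le]
  have h2 : ∫⁻ x, ‖g x‖ₑ ^ p ∂μ ≤ (M : ℝ≥0∞) ^ (p - 2) * ∫⁻ x, ‖g x‖ₑ ^ (2:ℝ≥0∞).toReal ∂μ := by
    rw [← lintegral_const_mul' _ _ (by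
      exact ENNReal.rpow_ne_top_of_nonneg (by linarith) ENNReal.coe_ne_top)]
    refine lintegral_mono_ae ?_
    filter_upwards [hM] with x hx
    have : ‖g x‖ₑ ^ p = ‖g x‖ₑ ^ (p - 2) * ‖g x‖ₑ ^ (2:ℝ) := by
      rw [← ENNReal.rpow_add_of_nonneg _ _ (by linarith) (by norm_num)]; congr 1; ring
    rw [this]
    refine mul_le_mul' (ENNReal.rpow_le_rpow hx (by linarith)) (by simp)
  calc _ ≤ ((M : ℝ≥0∞) ^ (p - 2) * ∫⁻ x, ‖g x‖ₑ ^ (2:ℝ≥0∞).toReal ∂μ) ^ (1 / p) := by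
        gcongr
    _ = _ := by
        rw [ENNReal.mul_rpow_of_nonneg _ _ (by positivity), ← ENNReal.rpow_mul, ← ENNReal.rpow_mul]
        congr 2
        · field_simp
        · simp; field_simp
  
/-- frequency projection -/
def proj {N : ℕ} (A : Set (Esp N)) (F : Esp N → ℂ) : Esp N → ℂ := 𝓕⁻ (A.indicator F)

lemma indicator_int {N : ℕ} {A : Set (Esp N)} (hA : MeasurableSet A) (hAf : volume A ≠ ⊤)
    {F : Esp N → ℂ} (hF : MemLp F 2 (volume : Measure (Esp N))) : Integrable (A.indicator F) := by
  rw [integrable_indicator_iff hA]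
  have : IsFiniteMeasure (volume.restrict A) := ⟨by simpa using hAf.lt_top⟩
  exact (hF.restrict A).integrable (by norm_num)

lemma proj_ae {N : ℕ} {A : Set (Esp N)} (hA : MeasurableSet A) (hAf : volume A ≠ ⊤)
    {F : Esp N → ℂ} (hF : MemLp F 2 (volume : Measure (Esp N))) :
    (𝓕⁻ ((hF.indicator hA).toLp _) : Lp ℂ 2 (volume : Measure (Esp N))) =ᵐ[volume] proj A F :=
  fourierInv_compat (indicator_int hA hAf hF) _

lemma proj_cont {N : ℕ} {A : Set (Esp N)} (hA : MeasurableSet A) (hAf : volume A ≠ ⊤)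
    {F : Esp N → ℂ} (hF : MemLp F 2 (volume : Measure (Esp N))) : Continuous (proj A F) :=
  fourierInv_cont (indicator_int hA hAf hF)

lemma proj_eLpNorm {N : ℕ} {A : Set (Esp N)} (hA : MeasurableSet A) (hAf : volume A ≠ ⊤)
    {F : Esp N → ℂ} (hF : MemLp F 2 (volume : Measure (Esp N))) :
    eLpNorm (proj A F) 2 volume = eLpNorm (A.indicator F) 2 volume := by
  rw [← eLpNorm_congr_ae (proj_ae hA hAf hF)]
  have h := FT_inv_norm ((hF.indicator hA).toLp _)
  rw [Lp.norm_def, Lp.norm_def] at h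
  rw [(ENNReal.toReal_eq_toReal_iff' (Lp.eLpNorm_ne_top _) (Lp.eLpNorm_ne_top _)).1 h]
  exact eLpNorm_congr_ae (hF.indicator hA).coeFn_toLp

lemma proj_sup {N : ℕ} {A : Set (Esp N)} (hA : MeasurableSet A) (hAf : volume A ≠ ⊤)
    {F : Esp N → ℂ} (hF : MemLp F 2 (volume : Measure (Esp N))) (x : Esp N) :
    ‖proj A F x‖ₑ ≤ volume A ^ (1/2 : ℝ) * eLpNorm (A.indicator F) 2 volume := by
  have h1 := fourierInv_norm_le (A.indicator F) x
  have h2 : ‖proj A F x‖ₑ ≤ ∫⁻ ξ, ‖A.indicator F ξ‖ₑ := by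
    rw [← ofReal_integral_norm_eq_lintegral_enorm (indicator_int hA hAf hF), ← ofReal_norm]
    exact ENNReal.ofReal_le_ofReal h1
  refine h2.trans ?_
  rw [← eLpNorm_one_eq_lintegral_enorm, eLpNorm_indicator_eq_eLpNorm_restrict hA,
    eLpNorm_indicator_eq_eLpNorm_restrict hA]
  have := eLpNorm_le_eLpNorm_mul_rpow_measure_univ (μ := volume.restrict A) (p := 1) (q := 2) (f := F)
    (by norm_num) hF.1.restrict
  refine this.trans ?_
  rw [mul_comm, Measure.restrict_apply_univ]
  norm_num

lemma proj_Lp {N : ℕ} {A : Set (Esp N)} (hA : MeasurableSet A) (hAf : volume A ≠ ⊤)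
    {F : Esp N → ℂ} (hF : MemLp F 2 (volume : Measure (Esp N))) {p : ℝ} (hp : 2 < p) :
    eLpNorm (proj A F) (ENNReal.ofReal p) volume ≤
      volume A ^ (1/2 - 1/p) * eLpNorm (A.indicator F) 2 volume := by
  set b := eLpNorm (A.indicator F) 2 volume with hb
  have hbf : b ≠ ⊤ := (hF.indicator hA).2.ne
  have hp0 : 0 < p := by linarith
  have hMf : volume A ^ (1/2 : ℝ) * b ≠ ⊤ :=
    ENNReal.mul_ne_top (ENNReal.rpow_ne_top_of_nonneg (by norm_num) hAf) hbf
  have h := interp_sup (μ := volume) (g := proj A F) (M := (volume A ^ (1/2 : ℝ) * b).toNNReal) hp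
    (Eventually.of_forall fun x => by
      rw [ENNReal.coe_toNNReal hMf]; exact proj_sup hA hAf hF x)
  rw [ENNReal.coe_toNNReal hMf, proj_eLpNorm hA hAf hF, ← hb] at h
  refine h.trans (le_of_eq ?_)
  have h2p : 2 / p < 1 := by rw [div_lt_one hp0]; exact hp
  have h2p0 : 0 < 2 / p := by positivity
  rw [ENNReal.mul_rpow_of_nonneg _ _ (by linarith), ← ENNReal.rpow_mul, mul_assoc,
    ← ENNReal.rpow_add_of_nonneg _ _ (by linarith) h2p0.le]
  have e1 : (1/2 : ℝ) * (1 - 2 / p) = 1/2 - 1/p := by field_simp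
  have e2 : 1 - 2 / p + 2 / p = 1 := by ring
  rw [e1, e2, ENNReal.rpow_one]
end

section
open scoped SchwartzMap LineDeriv FourierTransform ENNReal NNReal

lemma FT_eLpNorm {N : ℕ} {f : Esp N → ℂ} (hf : MemLp f 2 (volume : Measure (Esp N))) :
    eLpNorm (FT hf) 2 volume = eLpNorm f 2 volume := by
  have h := Lp.norm_fourier_eq (hf.toLp f)
  rw [Lp.norm_def, Lp.norm_def] at h
  rw [FT, (ENNReal.toReal_eq_toReal_iff' (Lp.eLpNorm_ne_top _) (Lp.eLpNorm_ne_top _)).1 h]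
  exact eLpNorm_congr_ae hf.coeFn_toLp

lemma tail_L2 {N : ℕ} (U : H2 N) {ρ : ℝ} (hρ : 0 < ρ) {A : Set (Esp N)}
    (hA : ∀ ξ ∈ A, ρ ≤ ‖ξ‖) :
    eLpNorm (A.indicator (FT U.u_mem)) 2 volume ≤
      ENNReal.ofReal (ρ ^ (-2:ℝ)) * eLpNorm U.lapl 2 volume := by
  rw [← FT_eLpNorm U.lapl_mem]
  refine eLpNorm_le_mul_eLpNorm_of_ae_le_mul (p := 2) ?_
  filter_upwards [FT_lapl U] with ξ h
  by_cases hξ : ξ ∈ A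
  · rw [Set.indicator_of_mem hξ, h, norm_mul, norm_neg, Complex.norm_real,
      Real.norm_of_nonneg (by positivity)]
    have h1 := hA ξ hξ
    have h2 : 1 ≤ ρ ^ (-2:ℝ) * (4 * Real.pi ^ 2 * ‖ξ‖ ^ 2) := by
      rw [Real.rpow_neg hρ.le, Real.rpow_two, ← div_eq_inv_mul, one_le_div (by positivity)]
      have : ρ ^ 2 ≤ ‖ξ‖ ^ 2 := by gcongr
      have h3 : (1:ℝ) ≤ Real.pi ^ 2 := by nlinarith [Real.pi_gt_three]
      nlinarith [sq_nonneg ‖ξ‖]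
    rw [← mul_assoc]
    exact le_mul_of_one_le_left (norm_nonneg _) h2
  · rw [Set.indicator_of_notMem hξ, norm_zero]; positivity

lemma vol_ball_ne_top {N : ℕ} (R : ℝ) : volume (Metric.ball (0 : Esp N) R) ≠ ⊤ :=
  measure_ball_lt_top.ne

lemma u_sub_proj_L2 {N : ℕ} (U : H2 N) {R : ℝ} (hR : 0 < R) :
    eLpNorm (fun x => U.u x - proj (Metric.ball 0 R) (FT U.u_mem) x) 2 volume ≤
      ENNReal.ofReal (R ^ (-2:ℝ)) * eLpNorm U.lapl 2 volume := by
  set F := FT U.u_mem with hF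
  have hFm : MemLp F 2 volume := Lp.memLp _
  have hB : MeasurableSet (Metric.ball (0 : Esp N) R) := measurableSet_ball
  have h1 := proj_ae hB (vol_ball_ne_top R) hFm
  set G := (hFm.indicator hB).toLp _ with hG
  have h2 : (𝓕⁻ F : Lp ℂ 2 (volume : Measure (Esp N))) = U.u_mem.toLp U.u := by
    rw [hF, FT, FourierTransform.fourierInv_fourier_eq]
  have h3 : (fun x => U.u x - proj (Metric.ball 0 R) F x) =ᵐ[volume]
      (𝓕⁻ (F - G) : Lp ℂ 2 (volume : Measure (Esp N))) := by
    have e : (𝓕⁻ (F - G) : Lp ℂ 2 (volume : Measure (Esp N))) = 𝓕⁻ F - 𝓕⁻ G := 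
      map_sub (Lp.fourierTransformₗᵢ (Esp N) ℂ).symm F G
    rw [e, h2]
    filter_upwards [h1, U.u_mem.coeFn_toLp, Lp.coeFn_sub (U.u_mem.toLp U.u) (𝓕⁻ G)] with x a b c
    rw [c, Pi.sub_apply, a, b]
  rw [eLpNorm_congr_ae h3]
  have h := FT_inv_norm (F - G)
  rw [Lp.norm_def, Lp.norm_def] at h
  rw [(ENNReal.toReal_eq_toReal_iff' (Lp.eLpNorm_ne_top _) (Lp.eLpNorm_ne_top _)).1 h]
  have h4 : (F - G : Lp ℂ 2 (volume : Measure (Esp N))) =ᵐ[volume] (Metric.ball (0:Esp N) R)ᶜ.indicator F := by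
    filter_upwards [Lp.coeFn_sub F G, (hFm.indicator hB).coeFn_toLp] with x a b
    rw [a, Pi.sub_apply, hG, b]
    by_cases hx : x ∈ Metric.ball (0:Esp N) R
    · simp [Set.indicator, hx]
    · simp only [Set.indicator, hx, Set.mem_compl_iff]; simp
  rw [eLpNorm_congr_ae h4]
  exact tail_L2 U hR fun ξ hξ => by simpa using hξ

lemma proj_union {N : ℕ} {A B : Set (Esp N)} (hA : MeasurableSet A) (hAf : volume A ≠ ⊤)
    (hB : MeasurableSet B) (hBf : volume B ≠ ⊤) (hd : Disjoint A B)
    {F : Esp N → ℂ} (hF : MemLp F 2 (volume : Measure (Esp N))) :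
    proj (A ∪ B) F = proj A F + proj B F := by
  unfold proj
  rw [Set.indicator_union_of_disjoint hd]
  have hc : Continuous fun p : Esp N × Esp N => (-innerₗ (Esp N)) p.1 p.2 := by
    simp only [LinearMap.neg_apply]
    exact continuous_inner.neg
  exact VectorFourier.fourierIntegral_add Real.continuous_fourierChar hc
    (indicator_int hA hAf hF) (indicator_int hB hBf hF)

lemma proj_sub {N : ℕ} {A : Set (Esp N)} (hA : MeasurableSet A) (hAf : volume A ≠ ⊤)
    {F G : Esp N → ℂ} (hF : MemLp F 2 (volume : Measure (Esp N)))
    (hG : MemLp G 2 (volume : Measure (Esp N))) :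
    proj A (F - G) = proj A F - proj A G := by
  unfold proj
  have e : A.indicator (F - G) = A.indicator F + A.indicator (-G) := by
    rw [← Set.indicator_add', sub_eq_add_neg]
  have e2 : A.indicator (-G) = (-1 : ℂ) • A.indicator G := by
    rw [Set.indicator_neg']; simp
  have hc : Continuous fun p : Esp N × Esp N => (-innerₗ (Esp N)) p.1 p.2 := by
    simp only [LinearMap.neg_apply]
    exact continuous_inner.neg
  rw [e, e2]
  have := VectorFourier.fourierIntegral_add (μ := volume) Real.continuous_fourierChar hc
    (indicator_int hA hAf hF) ((indicator_int hA hAf hG).smul (-1 : ℂ))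
  have h2 := VectorFourier.fourierIntegral_const_smul Real.fourierChar volume (-innerₗ (Esp N)) (A.indicator G) (-1 : ℂ)
  rw [h2] at this
  refine Eq.trans this ?_
  rw [neg_one_smul, ← sub_eq_add_neg]; rfl

lemma tail_Lp (N : ℕ) {p : ℝ} (hp : 2 < p) (hsub : (N : ℝ) * (1/2 - 1/p) < 2) :
    ∃ C : ℝ≥0∞, C ≠ ⊤ ∧ ∀ (U : H2 N) (R : ℝ), 0 < R →
      eLpNorm (fun x => U.u x - proj (Metric.ball 0 R) (FT U.u_mem) x) (ENNReal.ofReal p) volume ≤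
        C * ENNReal.ofReal (R ^ ((N : ℝ) * (1/2 - 1/p) - 2)) * eLpNorm U.lapl 2 volume := by
  have hp0 : 0 < p := by linarith
  set s : ℝ := 1/2 - 1/p with hs
  have hs0 : 0 < s := by
    rw [hs, sub_pos]; exact one_div_lt_one_div_of_lt (by norm_num) hp
  set d : ℝ := (N : ℝ) * s - 2 with hd
  have hd0 : d < 0 := by rw [hd]; linarith
  set ω := volume (Metric.ball (0 : Esp N) 1) with hω
  have hωf : ω ≠ ⊤ := vol_ball_ne_top 1
  set q : ℝ≥0∞ := ENNReal.ofReal ((2:ℝ) ^ d) with hq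
  have hq1 : q < 1 := by
    rw [hq, ← ENNReal.ofReal_one]
    exact (ENNReal.ofReal_lt_ofReal_iff one_pos).2 (Real.rpow_lt_one_of_one_lt_of_neg (by norm_num) hd0)
  set C0 : ℝ≥0∞ := ω ^ s * ENNReal.ofReal ((2:ℝ) ^ ((N:ℝ) * s)) with hC0
  have hC0f : C0 ≠ ⊤ := ENNReal.mul_ne_top (ENNReal.rpow_ne_top_of_nonneg hs0.le hωf) ENNReal.ofReal_ne_top
  refine ⟨C0 * (1 - q)⁻¹, ENNReal.mul_ne_top hC0f ?_, fun U R hR => ?_⟩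
  · rw [ENNReal.inv_ne_top]; exact (tsub_pos_of_lt hq1).ne'
  set F := FT U.u_mem with hF
  have hFm : MemLp F 2 volume := Lp.memLp _
  set L := eLpNorm U.lapl 2 volume with hL
  let r : ℕ → ℝ := fun k => R * 2 ^ k
  have hr0 : ∀ k, 0 < r k := fun k => by positivity
  have hrs : ∀ k, r (k+1) = 2 * r k := fun k => by simp only [r]; ring
  let A : ℕ → Set (Esp N) := fun k => Metric.ball 0 (r (k+1)) \ Metric.ball 0 (r k)
  have hAm : ∀ k, MeasurableSet (A k) := fun k => measurableSet_ball.diff measurableSet_ball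
  have hAsub : ∀ k, A k ⊆ Metric.ball 0 (r (k+1)) := fun k => Set.sdiff_subset
  have hAf : ∀ k, volume (A k) ≠ ⊤ := fun k => measure_ne_top_of_subset (hAsub k) (vol_ball_ne_top _)
  have hAv : ∀ k, volume (A k) ≤ ENNReal.ofReal ((2 * r k) ^ (N:ℝ)) * ω := by
    intro k
    refine (measure_mono (hAsub k)).trans ?_
    rw [Measure.addHaar_ball_of_pos _ _ (hr0 _), hrs]
    simp [hω]
  have hann : ∀ k, eLpNorm (proj (A k) F) (ENNReal.ofReal p) volume ≤
      C0 * ENNReal.ofReal (R ^ d) * L * q ^ k := by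
    intro k
    have h1 := proj_Lp (hAm k) (hAf k) hFm hp
    have h2 := tail_L2 U (hr0 k) (A := A k) (fun ξ hξ => by simpa using hξ.2)
    refine h1.trans ?_
    calc _ ≤ (ENNReal.ofReal ((2 * r k) ^ (N:ℝ)) * ω) ^ s * (ENNReal.ofReal (r k ^ (-2:ℝ)) * L) := by
          gcongr
          exact hAv k
      _ = _ := by
          rw [ENNReal.mul_rpow_of_nonneg _ _ hs0.le, ENNReal.ofReal_rpow_of_pos (by have := hr0 k; positivity),
            ← Real.rpow_mul (by have := hr0 k; positivity), Real.mul_rpow (by norm_num) (hr0 k).le, hC0, hq,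
            ← ENNReal.ofReal_pow (by positivity)]
          have e1 : ENNReal.ofReal (2 ^ ((N:ℝ) * s) * r k ^ ((N:ℝ) * s)) =
            ENNReal.ofReal (2 ^ ((N:ℝ) * s)) * ENNReal.ofReal (r k ^ ((N:ℝ) * s)) := ENNReal.ofReal_mul (by positivity)
          have e2 : ENNReal.ofReal (r k ^ ((N:ℝ) * s)) * ENNReal.ofReal (r k ^ (-2:ℝ)) =
              ENNReal.ofReal (R ^ d) * ENNReal.ofReal ((2 ^ d) ^ k) := by
            rw [← ENNReal.ofReal_mul (by have := hr0 k; positivity), ← ENNReal.ofReal_mul (by positivity),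
              ← Real.rpow_add (hr0 k)]
            congr 1
            have : (N:ℝ) * s + -2 = d := by rw [hd]; ring
            rw [this, Real.mul_rpow hR.le (by positivity), ← Real.rpow_natCast, ← Real.rpow_mul (by norm_num),
              ← Real.rpow_natCast, ← Real.rpow_mul (by norm_num), mul_comm d]
          rw [e1]
          calc _ = ω ^ s * ENNReal.ofReal (2 ^ ((N:ℝ) * s)) * L * (ENNReal.ofReal (r k ^ ((N:ℝ) * s)) * ENNReal.ofReal (r k ^ (-2:ℝ))) := by ring
            _ = _ := by rw [e2]; ring
  have hp1 : (1:ℝ≥0∞) ≤ ENNReal.ofReal p := by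
    rw [← ENNReal.ofReal_one]; exact ENNReal.ofReal_le_ofReal (by linarith)
  have hstep : ∀ k, proj (Metric.ball 0 (r (k+1))) F = proj (Metric.ball 0 (r k)) F + proj (A k) F := by
    intro k
    rw [← proj_union measurableSet_ball (vol_ball_ne_top _) (hAm k) (hAf k) Set.disjoint_sdiff_right hFm]
    congr 1
    exact (Set.union_sdiff_cancel (Metric.ball_subset_ball (by rw [hrs]; linarith [hr0 k]))).symm
  have hcont : ∀ k, Continuous (proj (Metric.ball 0 (r k)) F) := fun k =>
    proj_cont measurableSet_ball (vol_ball_ne_top _) hFm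
  have htel : ∀ k, eLpNorm (proj (Metric.ball 0 (r k)) F - proj (Metric.ball 0 (r 0)) F) (ENNReal.ofReal p) volume
      ≤ ∑ j ∈ Finset.range k, C0 * ENNReal.ofReal (R ^ d) * L * q ^ j := by
    intro k
    induction k with
    | zero => simp
    | succ k ih =>
      rw [hstep, add_sub_right_comm, Finset.sum_range_succ]
      refine (eLpNorm_add_le ((hcont k).sub (hcont 0)).aestronglyMeasurable
        (proj_cont (hAm k) (hAf k) hFm).aestronglyMeasurable hp1).trans ?_
      exact add_le_add ih (hann k)
  have hbd : ∀ k, eLpNorm (proj (Metric.ball 0 (r k)) F - proj (Metric.ball 0 (r 0)) F) (ENNReal.ofReal p) volume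
      ≤ C0 * (1 - q)⁻¹ * ENNReal.ofReal (R ^ d) * L := by
    intro k
    refine (htel k).trans ?_
    rw [← Finset.mul_sum]
    calc _ ≤ C0 * ENNReal.ofReal (R ^ d) * L * (1 - q)⁻¹ := by
          gcongr
          rw [← ENNReal.tsum_geometric]
          exact ENNReal.sum_le_tsum _
      _ = _ := by ring
  -- convergence in L²
  have hlim : Tendsto (fun k => eLpNorm (proj (Metric.ball 0 (r k)) F - U.u) 2 volume) atTop (𝓝 0) := by
    have hb : ∀ k, eLpNorm (proj (Metric.ball 0 (r k)) F - U.u) 2 volume ≤ ENNReal.ofReal (r k ^ (-2:ℝ)) * L := by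
      intro k
      rw [eLpNorm_sub_comm]
      exact u_sub_proj_L2 U (hr0 k)
    refine tendsto_of_tendsto_of_tendsto_of_le_of_le tendsto_const_nhds ?_ (fun _ => zero_le) hb
    have hrinf : Tendsto r atTop atTop :=
      (tendsto_pow_atTop_atTop_of_one_lt (by norm_num : (1:ℝ) < 2)).const_mul_atTop hR
    have h1 := (tendsto_rpow_neg_atTop (by norm_num : (0:ℝ) < 2)).comp hrinf
    have h2 := ENNReal.tendsto_ofReal h1
    rw [ENNReal.ofReal_zero] at h2
    have h3 := ENNReal.Tendsto.mul_const (b := L) h2 (Or.inr U.lapl_mem.2.ne)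
    simpa using h3
  obtain ⟨ns, hns, hae⟩ := (tendstoInMeasure_of_tendsto_eLpNorm two_ne_zero
    (fun k => (hcont k).aestronglyMeasurable) U.u_mem.1 hlim).exists_seq_tendsto_ae
  have hr00 : r 0 = R := by simp [r]
  rw [← hr00] at hbd ⊢
  refine Lp.eLpNorm_le_of_ae_tendsto (u := atTop)
    (f := fun k => proj (Metric.ball 0 (r (ns k))) F - proj (Metric.ball 0 (r 0)) F)
    (Eventually.of_forall fun k => hbd (ns k)) (fun k => ((hcont _).sub (hcont 0)).aestronglyMeasurable) ?_
  filter_upwards [hae] with x hx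
  exact hx.sub_const _
end

section
open scoped ContDiff

lemma TestFun.lap {N : ℕ} {φ : Esp N → ℂ} (h : TestFun φ) : TestFun (lapC φ) := by
  have e : lapC φ = ∑ i, pderivC i (pderivC i φ) := by
    funext x; simp [lapC]
  refine ⟨?_, ?_⟩
  · exact ContDiff.sum fun i _ => ((h.pd i).pd i).1
  · rw [e]
    refine Finset.sum_induction _ (fun f : Esp N → ℂ => HasCompactSupport f) (fun a b ha hb => ha.add hb)
      HasCompactSupport.zero (fun i _ => ((h.pd i).pd i).2)

/-- difference in `H²` -/
def H2.sub {N : ℕ} (U V : H2 N) : H2 N where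
  u := U.u - V.u
  grad := fun i => U.grad i - V.grad i
  lapl := U.lapl - V.lapl
  u_mem := U.u_mem.sub V.u_mem
  grad_mem := fun i => (U.grad_mem i).sub (V.grad_mem i)
  lapl_mem := U.lapl_mem.sub V.lapl_mem
  grad_spec := by
    intro i φ hφ
    simp only [Pi.sub_apply, sub_mul]
    rw [integral_sub (int_mul_L2 U.u_mem (hφ.pd i).memLp) (int_mul_L2 V.u_mem (hφ.pd i).memLp),
      integral_sub (int_mul_L2 (U.grad_mem i) hφ.memLp) (int_mul_L2 (V.grad_mem i) hφ.memLp),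
      U.grad_spec i φ hφ, V.grad_spec i φ hφ]
    ring
  lapl_spec := by
    intro φ hφ
    simp only [Pi.sub_apply, sub_mul]
    rw [integral_sub (int_mul_L2 U.u_mem hφ.lap.memLp) (int_mul_L2 V.u_mem hφ.lap.memLp),
      integral_sub (int_mul_L2 U.lapl_mem hφ.memLp) (int_mul_L2 V.lapl_mem hφ.memLp),
      U.lapl_spec φ hφ, V.lapl_spec φ hφ]

/-- scalar multiple in `H²` -/
def H2.smul {N : ℕ} (c : ℂ) (U : H2 N) : H2 N where
  u := c • U.u
  grad := fun i => c • U.grad i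
  lapl := c • U.lapl
  u_mem := U.u_mem.const_smul c
  grad_mem := fun i => (U.grad_mem i).const_smul c
  lapl_mem := U.lapl_mem.const_smul c
  grad_spec := by
    intro i φ hφ
    simp only [Pi.smul_apply, smul_eq_mul, mul_assoc]
    rw [integral_const_mul, integral_const_mul, U.grad_spec i φ hφ]
    ring
  lapl_spec := by
    intro φ hφ
    simp only [Pi.smul_apply, smul_eq_mul, mul_assoc]
    rw [integral_const_mul, integral_const_mul, U.lapl_spec φ hφ]

lemma pderivC_trans {N : ℕ} (i : Fin N) (φ : Esp N → ℂ) (h : Esp N) :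
    pderivC i (fun x => φ (x + h)) = fun x => pderivC i φ (x + h) := by
  funext x
  simp only [pderivC]
  rw [fderiv_comp_add_right]

lemma pderivC_const_mul {N : ℕ} (i : Fin N) {φ : Esp N → ℂ} (hφ : TestFun φ) (c : ℂ) :
    pderivC i (fun x => c * φ x) = fun x => c * pderivC i φ x := by
  funext x
  simp only [pderivC]
  rw [fderiv_const_mul ((hφ.1.differentiable (by simp)) x)]
  simp

lemma pderivC_dil {N : ℕ} (i : Fin N) {φ : Esp N → ℂ} (hφ : TestFun φ) (r : ℝ) :
    pderivC i (fun x => φ (r • x)) = fun x => (r : ℂ) * pderivC i φ (r • x) := by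
  funext x
  simp only [pderivC]
  have h1 : HasFDerivAt (fun x : Esp N => r • x) (r • ContinuousLinearMap.id ℝ (Esp N)) x :=
    (hasFDerivAt_id x).const_smul r
  have h2 := ((hφ.1.differentiable (by simp)) (r • x)).hasFDerivAt.comp x h1
  have h3 := h2.fderiv
  simp only [Function.comp_def] at h3
  rw [h3]
  simp

lemma TestFun.trans {N : ℕ} {φ : Esp N → ℂ} (hφ : TestFun φ) (h : Esp N) :
    TestFun (fun x => φ (x + h)) :=
  ⟨hφ.1.comp (contDiff_id.add contDiff_const), hφ.2.comp_homeomorph (Homeomorph.addRight h)⟩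

lemma TestFun.dil {N : ℕ} {φ : Esp N → ℂ} (hφ : TestFun φ) {r : ℝ} (hr : r ≠ 0) :
    TestFun (fun x => φ (r • x)) :=
  ⟨hφ.1.comp (contDiff_const_smul r), hφ.2.comp_smul hr⟩

lemma TestFun.cmul {N : ℕ} {φ : Esp N → ℂ} (hφ : TestFun φ) (c : ℂ) :
    TestFun (fun x => c * φ x) :=
  ⟨contDiff_const.mul hφ.1, hφ.2.mul_left⟩

lemma lapC_trans {N : ℕ} (φ : Esp N → ℂ) (h : Esp N) :
    lapC (fun x => φ (x + h)) = fun x => lapC φ (x + h) := by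
  funext x
  simp only [lapC, pderivC_trans]

lemma lapC_dil {N : ℕ} {φ : Esp N → ℂ} (hφ : TestFun φ) {r : ℝ} (hr : r ≠ 0) :
    lapC (fun x => φ (r • x)) = fun x => (r : ℂ)^2 * lapC φ (r • x) := by
  funext x
  simp only [lapC, Finset.mul_sum]
  refine Finset.sum_congr rfl fun i _ => ?_
  rw [pderivC_dil i hφ, pderivC_const_mul i ((hφ.pd i).dil hr), pderivC_dil i (hφ.pd i)]
  ring

lemma mp_trans {N : ℕ} (h : Esp N) : MeasurePreserving (fun x : Esp N => x + h) volume volume :=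
  measurePreserving_add_right volume h

/-- translate in `H²` -/
def H2.trans {N : ℕ} (U : H2 N) (h : Esp N) : H2 N where
  u := fun x => U.u (x + h)
  grad := fun i x => U.grad i (x + h)
  lapl := fun x => U.lapl (x + h)
  u_mem := U.u_mem.comp_measurePreserving (mp_trans h)
  grad_mem := fun i => (U.grad_mem i).comp_measurePreserving (mp_trans h)
  lapl_mem := U.lapl_mem.comp_measurePreserving (mp_trans h)
  grad_spec := by
    intro i φ hφ
    have h1 := U.grad_spec i _ (hφ.trans (-h))
    rw [pderivC_trans, ← integral_add_right_eq_self _ h,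
      ← integral_add_right_eq_self (fun x => U.grad i x * _) h] at h1
    simpa using h1
  lapl_spec := by
    intro φ hφ
    have h1 := U.lapl_spec _ (hφ.trans (-h))
    rw [lapC_trans, ← integral_add_right_eq_self _ h,
      ← integral_add_right_eq_self (fun x => U.lapl x * _) h] at h1
    simpa using h1

lemma eLpNorm_dil {N : ℕ} {f : Esp N → ℂ} (hf : AEStronglyMeasurable f volume) {r : ℝ} (hr : 0 < r)
    (p : ENNReal) (hp : p ≠ ⊤) :
    eLpNorm (fun x => f (r • x)) p volume =
      ENNReal.ofReal ((r ^ N)⁻¹) ^ (1 / p).toReal * eLpNorm f p volume := by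
  have h1 := Measure.map_addHaar_smul (volume : Measure (Esp N)) hr.ne'
  have hfr : Module.finrank ℝ (Esp N) = N := by simp
  rw [hfr, abs_of_pos (by positivity)] at h1
  have hm : AEStronglyMeasurable f (Measure.map (fun x : Esp N => r • x) volume) := by
    rw [h1]; exact hf.smul_measure _
  have h2 := eLpNorm_map_measure (p := p) hm (measurable_const_smul r).aemeasurable
  rw [h1, eLpNorm_smul_measure_of_ne_top hp, smul_eq_mul] at h2
  rw [h2]; rfl

lemma memLp_dil {N : ℕ} {f : Esp N → ℂ} {p : ENNReal} (hf : MemLp f p (volume : Measure (Esp N)))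
    {r : ℝ} (hr : 0 < r) (hp : p ≠ ⊤) : MemLp (fun x => f (r • x)) p (volume : Measure (Esp N)) := by
  have h1 := Measure.map_addHaar_smul (volume : Measure (Esp N)) hr.ne'
  refine ⟨?_, ?_⟩
  · have hm : AEStronglyMeasurable f (Measure.map (fun x : Esp N => r • x) volume) := by
      rw [h1]; exact hf.1.smul_measure _
    exact hm.comp_measurable (measurable_const_smul r)
  · rw [eLpNorm_dil hf.1 hr p hp]
    exact ENNReal.mul_lt_top (ENNReal.rpow_lt_top_of_nonneg ENNReal.toReal_nonneg ENNReal.ofReal_ne_top) hf.2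

lemma integral_dil {N : ℕ} (f : Esp N → ℂ) {r : ℝ} (hr : 0 < r) :
    ∫ x, f x = ((r ^ N : ℝ) : ℂ) * ∫ x, f (r • x) := by
  rw [Measure.integral_comp_smul]
  have hfr : Module.finrank ℝ (Esp N) = N := by simp
  rw [hfr, abs_of_pos (by positivity), Complex.real_smul, ← mul_assoc, ← Complex.ofReal_mul,
    mul_inv_cancel₀ (by positivity), Complex.ofReal_one, one_mul]

/-- dilate in `H²` -/
def H2.dil {N : ℕ} (U : H2 N) {r : ℝ} (hr : 0 < r) : H2 N where
  u := fun x => U.u (r • x)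
  grad := fun i => (r : ℂ) • fun x => U.grad i (r • x)
  lapl := ((r : ℂ) ^ 2) • fun x => U.lapl (r • x)
  u_mem := memLp_dil U.u_mem hr (by simp)
  grad_mem := fun i => (memLp_dil (U.grad_mem i) hr (by simp)).const_smul _
  lapl_mem := (memLp_dil U.lapl_mem hr (by simp)).const_smul _
  grad_spec := by
    intro i φ hφ
    have h1 := U.grad_spec i _ (hφ.dil (inv_ne_zero hr.ne'))
    rw [pderivC_dil i hφ, integral_dil _ hr, integral_dil (fun x => U.grad i x * _) hr, ← mul_neg] at h1
    have h2 := mul_left_cancel₀ (by exact_mod_cast (pow_pos hr N).ne') h1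
    simp only [smul_smul, inv_mul_cancel₀ hr.ne', one_smul] at h2
    have hrc : (r : ℂ) ≠ 0 := by exact_mod_cast hr.ne'
    have e : ∀ x, U.u (r • x) * pderivC i φ x = (r:ℂ) * (U.u (r • x) * (((r⁻¹ : ℝ) : ℂ) * pderivC i φ x)) := by
      intro x; push_cast; field_simp
    simp only [e, integral_const_mul, h2, Pi.smul_apply, smul_eq_mul, mul_assoc]
    ring
  lapl_spec := by
    intro φ hφ
    have h1 := U.lapl_spec _ (hφ.dil (inv_ne_zero hr.ne'))
    rw [lapC_dil hφ (inv_ne_zero hr.ne'), integral_dil _ hr, integral_dil (fun x => U.lapl x * _) hr] at h1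
    have h2 := mul_left_cancel₀ (by exact_mod_cast (pow_pos hr N).ne') h1
    simp only [smul_smul, inv_mul_cancel₀ hr.ne', one_smul] at h2
    have hrc : (r : ℂ) ≠ 0 := by exact_mod_cast hr.ne'
    have e : ∀ x, U.u (r • x) * lapC φ x = (r:ℂ)^2 * (U.u (r • x) * (((r⁻¹ : ℝ) : ℂ)^2 * lapC φ x)) := by
      intro x; push_cast; field_simp
    simp only [e, integral_const_mul, h2, Pi.smul_apply, smul_eq_mul, mul_assoc]

lemma ibp_test {N : ℕ} {f g : Esp N → ℂ} (hf : TestFun f) (hg : TestFun g) (i : Fin N) :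
    ∫ x, f x * pderivC i g x = - ∫ x, pderivC i f x * g x :=
  integral_mul_fderiv_eq_neg_fderiv_mul_of_integrable
    (int_mul_L2 (hf.pd i).memLp hg.memLp) (int_mul_L2 hf.memLp (hg.pd i).memLp)
    (int_mul_L2 hf.memLp hg.memLp) (fun x _ => (hf.1.differentiable (by simp)) x)
    (fun x _ => (hg.1.differentiable (by simp)) x)

/-- test functions are in `H²` -/
def H2.ofTest {N : ℕ} {f : Esp N → ℂ} (hf : TestFun f) : H2 N where
  u := f
  grad := fun i => pderivC i f
  lapl := lapC f
  u_mem := hf.memLp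
  grad_mem := fun i => (hf.pd i).memLp
  lapl_mem := hf.lap.memLp
  grad_spec := fun i φ hφ => ibp_test hf hφ i
  lapl_spec := by
    intro φ hφ
    simp only [lapC, Finset.mul_sum, Finset.sum_mul]
    rw [integral_finsetSum _ fun i _ => int_mul_L2 hf.memLp ((hφ.pd i).pd i).memLp,
      integral_finsetSum _ fun i _ => int_mul_L2 ((hf.pd i).pd i).memLp hφ.memLp]
    refine Finset.sum_congr rfl fun i _ => ?_
    rw [ibp_test hf (hφ.pd i), ibp_test (hf.pd i) hφ, neg_neg]

lemma exists_nontriv (N : ℕ) : ∃ U : H2 N, U.Nontriv := by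
  let χ : ContDiffBump (0 : Esp N) := ⟨1, 2, by norm_num, by norm_num⟩
  have hχs : ContDiff ℝ ∞ (χ : Esp N → ℝ) := χ.contDiff
  have hχc : HasCompactSupport (χ : Esp N → ℝ) := χ.hasCompactSupport
  have ht : TestFun (fun x => (χ x : ℂ)) :=
    ⟨Complex.ofRealCLM.contDiff.comp hχs, hχc.comp_left (g := fun t : ℝ => (t:ℂ)) (by simp)⟩
  refine ⟨H2.ofTest ht, fun h => ?_⟩
  have h2 := Continuous.ae_eq_iff_eq (volume : Measure (Esp N)) ht.1.continuous continuous_zero |>.1 h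
  have h3 : χ (0 : Esp N) = 1 := χ.one_of_mem_closedBall (by simp [χ])
  have h4 := congrFun h2 0
  simp [h3] at h4
end

section
open scoped ENNReal NNReal

lemma rLp_nonneg {N : ℕ} (p : ℝ) (f : Esp N → ℂ) : 0 ≤ rLp p f := ENNReal.toReal_nonneg

lemma rLp_two {N : ℕ} (f : Esp N → ℂ) : rLp 2 f = (eLpNorm f 2 (volume : Measure (Esp N))).toReal := by
  simp [rLp]

lemma rLp_pow {N : ℕ} {p : ℝ} (hp : 0 < p) {f : Esp N → ℂ}
    (hf : MemLp f (ENNReal.ofReal p) (volume : Measure (Esp N))) :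
    ∫ x, ‖f x‖ ^ p = rLp p f ^ p := by
  rw [rLp, hf.eLpNorm_eq_integral_rpow_norm (by simpa using hp) (by simp), ENNReal.toReal_ofReal hp.le,
    ENNReal.toReal_ofReal (by positivity), ← Real.rpow_mul (by positivity), inv_mul_cancel₀ hp.ne', Real.rpow_one]

lemma rLp_two_sq {N : ℕ} {f : Esp N → ℂ} (hf : MemLp f 2 (volume : Measure (Esp N))) :
    ∫ x, ‖f x‖ ^ 2 = rLp 2 f ^ 2 := by
  have := rLp_pow (N := N) (p := 2) (by norm_num) (f := f) (by simpa using hf)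
  simpa using this

lemma massSq_eq {N : ℕ} (U : H2 N) : U.massSq = rLp 2 U.u ^ 2 := rLp_two_sq U.u_mem
lemma lapSq_eq {N : ℕ} (U : H2 N) : U.lapSq = rLp 2 U.lapl ^ 2 := rLp_two_sq U.lapl_mem
lemma massSq_nonneg {N : ℕ} (U : H2 N) : 0 ≤ U.massSq := by rw [massSq_eq]; positivity
lemma lapSq_nonneg {N : ℕ} (U : H2 N) : 0 ≤ U.lapSq := by rw [lapSq_eq]; positivity
lemma Kfun_nonneg {N : ℕ} (U : H2 N) : 0 ≤ Kfun U := add_nonneg (lapSq_nonneg U) (massSq_nonneg U)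

lemma grad_bound {N : ℕ} (U : H2 N) (i : Fin N) :
    eLpNorm (U.grad i) 2 volume ≤ eLpNorm U.u 2 volume + eLpNorm U.lapl 2 volume := by
  rw [← FT_eLpNorm (U.grad_mem i), ← FT_eLpNorm U.u_mem, ← FT_eLpNorm U.lapl_mem,
    ← eLpNorm_norm (FT U.u_mem), ← eLpNorm_norm (FT U.lapl_mem)]
  refine le_trans ?_ (eLpNorm_add_le (Lp.memLp (FT U.u_mem)).1.norm (Lp.memLp (FT U.lapl_mem)).1.norm (by norm_num))
  refine eLpNorm_mono_ae ?_
  filter_upwards [FT_grad U i, FT_lapl U] with ξ h1 h2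
  rw [Pi.add_apply, h1, h2, Real.norm_of_nonneg (by positivity)]
  simp only [norm_mul, norm_neg, Complex.norm_real, Complex.norm_I]
  have h3 : ‖ξ i‖ ≤ ‖ξ‖ := PiLp.norm_apply_le ξ i
  have e1 : ‖Real.pi‖ = Real.pi := Real.norm_of_nonneg Real.pi_pos.le
  have e2 : ‖‖ξ‖‖ = ‖ξ‖ := norm_norm _
  simp only [norm_pow, e1, e2, Real.norm_ofNat]
  have h4 : ‖(2:ℂ)‖ * Real.pi * 1 * ‖ξ i‖ ≤ 1 + 4 * Real.pi ^ 2 * ‖ξ‖ ^ 2 := by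
    have : 2 * Real.pi * ‖ξ i‖ ≤ 2 * Real.pi * ‖ξ‖ := by gcongr
    simp only [Complex.norm_ofNat, mul_one]
    nlinarith [sq_nonneg (2 * Real.pi * ‖ξ‖ - 1)]
  nlinarith [norm_nonneg ((FT U.u_mem : Esp N → ℂ) ξ)]

lemma embed (N : ℕ) {p : ℝ} (hp : 2 < p) (hsub : (N : ℝ) * (1/2 - 1/p) < 2) :
    ∃ C : ℝ≥0∞, C ≠ ⊤ ∧ ∀ (U : H2 N),
      eLpNorm U.u (ENNReal.ofReal p) volume ≤ C * (eLpNorm U.u 2 volume + eLpNorm U.lapl 2 volume) := by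
  obtain ⟨C, hC, h⟩ := tail_Lp N hp hsub
  set D := volume (Metric.ball (0 : Esp N) 1) ^ (1/2 - 1/p) with hD
  have hs0 : 0 ≤ 1/2 - 1/p := by
    rw [sub_nonneg]; exact one_div_le_one_div_of_le (by norm_num) hp.le
  have hDf : D ≠ ⊤ := ENNReal.rpow_ne_top_of_nonneg hs0 (vol_ball_ne_top 1)
  refine ⟨C + D, by simp [hC, hDf], fun U => ?_⟩
  have hFm : MemLp (FT U.u_mem) 2 volume := Lp.memLp _
  have h1 := h U 1 one_pos
  simp only [Real.one_rpow, ENNReal.ofReal_one, mul_one] at h1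
  have h2 := proj_Lp measurableSet_ball (vol_ball_ne_top 1) hFm hp
  have h3 : eLpNorm ((Metric.ball (0 : Esp N) 1).indicator (FT U.u_mem)) 2 volume ≤ eLpNorm U.u 2 volume := by
    rw [← FT_eLpNorm U.u_mem]
    exact eLpNorm_indicator_le _
  have hcont := proj_cont (measurableSet_ball (x := (0:Esp N)) (ε := 1)) (vol_ball_ne_top 1) hFm
  have hp1 : (1:ℝ≥0∞) ≤ ENNReal.ofReal p := by
    rw [← ENNReal.ofReal_one]; exact ENNReal.ofReal_le_ofReal (by linarith)
  have e : U.u = (fun x => U.u x - proj (Metric.ball 0 1) (FT U.u_mem) x) + proj (Metric.ball 0 1) (FT U.u_mem) := by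
    funext x; simp
  calc eLpNorm U.u (ENNReal.ofReal p) volume ≤ eLpNorm (fun x => U.u x - proj (Metric.ball 0 1) (FT U.u_mem) x) (ENNReal.ofReal p) volume + eLpNorm (proj (Metric.ball 0 1) (FT U.u_mem)) (ENNReal.ofReal p) volume := by
        conv_lhs => rw [e]
        exact eLpNorm_add_le (U.u_mem.1.sub hcont.aestronglyMeasurable) hcont.aestronglyMeasurable hp1
    _ ≤ C * eLpNorm U.lapl 2 volume + D * eLpNorm U.u 2 volume := by
        refine add_le_add h1 (h2.trans ?_)
        gcongr
    _ ≤ _ := by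
        rw [mul_add, add_mul, add_mul]
        calc _ ≤ (C * eLpNorm U.lapl 2 volume + D * eLpNorm U.u 2 volume) + (C * eLpNorm U.u 2 volume + D * eLpNorm U.lapl 2 volume) := le_self_add
          _ = _ := by ring

/-- hypotheses on the exponent `p = 2σ+2` -/
structure SubC (N : ℕ) (p : ℝ) : Prop where
  gt : 2 < p
  sub : (N : ℝ) * (1/2 - 1/p) < 2

lemma memLp_p {N : ℕ} {p : ℝ} (hp : SubC N p) (U : H2 N) : MemLp U.u (ENNReal.ofReal p) volume := by
  obtain ⟨C, hC, h⟩ := embed N hp.gt hp.sub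
  refine ⟨U.u_mem.1, (h U).trans_lt ?_⟩
  exact ENNReal.mul_lt_top hC.lt_top (ENNReal.add_lt_top.2 ⟨U.u_mem.2, U.lapl_mem.2⟩)

lemma embed_real {N : ℕ} {p : ℝ} (hp : SubC N p) :
    ∃ C : ℝ, 0 < C ∧ ∀ U : H2 N, rLp p U.u ^ 2 ≤ C * Kfun U := by
  obtain ⟨C, hC, h⟩ := embed N hp.gt hp.sub
  refine ⟨2 * C.toReal ^ 2 + 1, by positivity, fun U => ?_⟩
  have h1 : rLp p U.u ≤ C.toReal * (rLp 2 U.u + rLp 2 U.lapl) := by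
    rw [rLp_two, rLp_two, ← ENNReal.toReal_add U.u_mem.2.ne U.lapl_mem.2.ne, ← ENNReal.toReal_mul]
    exact ENNReal.toReal_mono (ENNReal.mul_ne_top hC (ENNReal.add_ne_top.2 ⟨U.u_mem.2.ne, U.lapl_mem.2.ne⟩)) (h U)
  have h2 := rLp_nonneg p U.u
  rw [Kfun, massSq_eq, lapSq_eq]
  have h3 := rLp_nonneg 2 U.u
  have h4 := rLp_nonneg 2 U.lapl
  have hc : 0 ≤ C.toReal := ENNReal.toReal_nonneg
  calc rLp p U.u ^ 2 ≤ (C.toReal * (rLp 2 U.u + rLp 2 U.lapl)) ^ 2 := by gcongr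
    _ = C.toReal^2 * (rLp 2 U.u + rLp 2 U.lapl) ^ 2 := by ring
    _ ≤ C.toReal^2 * (2 * (rLp 2 U.lapl ^ 2 + rLp 2 U.u ^ 2)) := by
        gcongr; nlinarith [sq_nonneg (rLp 2 U.u - rLp 2 U.lapl)]
    _ ≤ _ := by nlinarith [sq_nonneg (rLp 2 U.u), sq_nonneg (rLp 2 U.lapl)]

lemma rLp_smul {N : ℕ} (p : ℝ) (c : ℂ) (f : Esp N → ℂ) : rLp p (c • f) = ‖c‖ * rLp p f := by
  rw [rLp, eLpNorm_const_smul, ENNReal.toReal_mul, rLp]; simp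

lemma rLp_trans {N : ℕ} (p : ℝ) (h : Esp N) {f : Esp N → ℂ} (hf : AEStronglyMeasurable f volume) :
    rLp p (fun x => f (x + h)) = rLp p f := by
  rw [rLp, rLp, ← eLpNorm_comp_measurePreserving hf (mp_trans h)]; rfl

lemma rLp_dil {N : ℕ} {p : ℝ} (hp : 0 < p) {r : ℝ} (hr : 0 < r) {f : Esp N → ℂ} (hf : AEStronglyMeasurable f volume) :
    rLp p (fun x => f (r • x)) = r ^ (-(N / p : ℝ)) * rLp p f := by
  rw [rLp, eLpNorm_dil hf hr _ (by simp), ENNReal.toReal_mul, rLp, one_div, ENNReal.toReal_inv, ENNReal.toReal_ofReal hp.le,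
    ENNReal.ofReal_rpow_of_pos (by positivity), ENNReal.toReal_ofReal (by positivity)]
  congr 1
  rw [← Real.rpow_natCast, ← Real.rpow_neg hr.le, ← Real.rpow_mul hr.le]
  congr 1
  field_simp

lemma rLp_pos {N : ℕ} {p : ℝ} (hp : SubC N p) {U : H2 N} (hU : U.Nontriv) : 0 < rLp p U.u := by
  refine ENNReal.toReal_pos (fun h => hU ?_) (memLp_p hp U).2.ne
  have : 0 < p := by linarith [hp.gt]
  exact (eLpNorm_eq_zero_iff U.u_mem.1 (by simpa using this)).1 h

lemma Kfun_smul {N : ℕ} (c : ℂ) (U : H2 N) : Kfun (U.smul c) = ‖c‖^2 * Kfun U := by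
  rw [Kfun, Kfun, massSq_eq, lapSq_eq, massSq_eq, lapSq_eq]
  show rLp 2 (c • U.lapl) ^ 2 + rLp 2 (c • U.u) ^ 2 = _
  rw [rLp_smul, rLp_smul]; ring

lemma Kfun_trans {N : ℕ} (h : Esp N) (U : H2 N) : Kfun (U.trans h) = Kfun U := by
  rw [Kfun, Kfun, massSq_eq, lapSq_eq, massSq_eq, lapSq_eq]
  show rLp 2 (fun x => U.lapl (x + h)) ^ 2 + rLp 2 (fun x => U.u (x + h)) ^ 2 = _
  rw [rLp_trans _ _ U.lapl_mem.1, rLp_trans _ _ U.u_mem.1]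

/-- the infimum for a general exponent -/
def Ip (N : ℕ) (p : ℝ) : ℝ := sInf {r : ℝ | ∃ U : H2 N, rLp p U.u = 1 ∧ r = Kfun U}

lemma Ip_le {N : ℕ} {p : ℝ} {U : H2 N} (hU : rLp p U.u = 1) : Ip N p ≤ Kfun U :=
  csInf_le ⟨0, by rintro r ⟨V, _, rfl⟩; exact Kfun_nonneg V⟩ ⟨U, hU, rfl⟩

lemma Ip_pos {N : ℕ} {p : ℝ} (hp : SubC N p) : 0 < Ip N p := by
  obtain ⟨C, hC, h⟩ := embed_real hp
  have h1 : 1 / C ≤ Ip N p := by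
    refine le_csInf ?_ ?_
    · obtain ⟨U, hU⟩ := exists_nontriv N
      have h0 := rLp_pos hp hU
      refine ⟨_, U.smul ((rLp p U.u)⁻¹ : ℝ), ?_, rfl⟩
      show rLp p (_ • U.u) = 1
      rw [rLp_smul, Complex.norm_real, Real.norm_of_nonneg (by positivity), inv_mul_cancel₀ h0.ne']
    · rintro r ⟨V, hV, rfl⟩
      have := h V
      rw [hV] at this
      rw [div_le_iff₀ hC]; linarith
  exact lt_of_lt_of_le (by positivity) h1

lemma Ip_mul_le {N : ℕ} {p : ℝ} (U : H2 N) : Ip N p * rLp p U.u ^ 2 ≤ Kfun U := by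
  rcases (rLp_nonneg p U.u).eq_or_lt with h | h0
  · rw [← h]; simpa using Kfun_nonneg U
  · have : rLp p (U.smul ((rLp p U.u)⁻¹ : ℝ)).u = 1 := by
      show rLp p (_ • U.u) = 1
      rw [rLp_smul, Complex.norm_real, Real.norm_of_nonneg (by positivity), inv_mul_cancel₀ h0.ne']
    have h1 := Ip_le this
    rw [Kfun_smul, Complex.norm_real, Real.norm_of_nonneg (by positivity), inv_pow] at h1
    rwa [← le_div_iff₀ (by positivity), div_eq_inv_mul]
end

section

lemma scal {N : ℕ} {p : ℝ} (hp : 2 < p) (V : H2 N) {s : ℝ} (hs : 0 < s) :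
    Ip N p * rLp p V.u ^ 2 ≤ s ^ (-((N:ℝ) * (1/2 - 1/p) / 2)) * (s * rLp 2 V.lapl ^ 2 + rLp 2 V.u ^ 2) := by
  have hp0 : 0 < p := by linarith
  set r : ℝ := s ^ (1/4 : ℝ) with hr
  have hr0 : 0 < r := by positivity
  have hsr : s = r ^ 4 := by
    rw [hr, ← Real.rpow_natCast, ← Real.rpow_mul hs.le]; norm_num
  have h1 := Ip_mul_le (p := p) (V.dil hr0)
  rw [Kfun, massSq_eq, lapSq_eq] at h1
  have e1 : rLp p (V.dil hr0).u = r ^ (-(N / p : ℝ)) * rLp p V.u := rLp_dil hp0 hr0 V.u_mem.1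
  have e2 : rLp 2 (V.dil hr0).u = r ^ (-(N / 2 : ℝ)) * rLp 2 V.u := rLp_dil two_pos hr0 V.u_mem.1
  have e3 : rLp 2 (V.dil hr0).lapl = r ^ 2 * (r ^ (-(N / 2 : ℝ)) * rLp 2 V.lapl) := by
    rw [← rLp_dil two_pos hr0 V.lapl_mem.1]
    show rLp 2 (((r : ℂ) ^ 2) • fun x => V.lapl (r • x)) = _
    rw [rLp_smul]; simp
  rw [e1, e2, e3] at h1
  have e4 : s ^ (-((N:ℝ) * (1/2 - 1/p) / 2)) * (r ^ (-(N / p : ℝ))) ^ 2 = (r ^ (-(N / 2 : ℝ))) ^ 2 := by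
    rw [hsr, ← Real.rpow_natCast r 4, ← Real.rpow_mul hr0.le, ← Real.rpow_natCast, ← Real.rpow_natCast, ← Real.rpow_mul hr0.le, ← Real.rpow_mul hr0.le,
      ← Real.rpow_add hr0]
    congr 1
    push_cast; field_simp; ring
  have hpos : 0 < (r ^ (-(N / p : ℝ))) ^ 2 := by positivity
  have h2 : (r ^ (-(N / p : ℝ))) ^ 2 * (Ip N p * rLp p V.u ^ 2) ≤ (r ^ (-(N / p : ℝ))) ^ 2 *
      (s ^ (-((N:ℝ) * (1/2 - 1/p) / 2)) * (s * rLp 2 V.lapl ^ 2 + rLp 2 V.u ^ 2)) := by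
    calc _ = Ip N p * (r ^ (-(N / p : ℝ)) * rLp p V.u) ^ 2 := by ring
      _ ≤ _ := h1
      _ = (r ^ (-(N / 2 : ℝ))) ^ 2 * (r ^ 4 * rLp 2 V.lapl ^ 2 + rLp 2 V.u ^ 2) := by ring
      _ = _ := by rw [← e4, ← hsr]; ring
  exact le_of_mul_le_mul_left h2 hpos

lemma opt_s {θ A D M : ℝ} (h0 : 0 < θ) (h1 : θ < 1) (hD : 0 < D) (hM : 0 < M)
    (h : ∀ s : ℝ, 0 < s → A ≤ s ^ (-θ) * (s * D + M)) :
    A ≤ (D / θ) ^ θ * (M / (1 - θ)) ^ (1 - θ) := by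
  have h1' : 0 < 1 - θ := by linarith
  set x := D / θ with hx
  set y := M / (1 - θ) with hy
  have hx0 : 0 < x := by positivity
  have hy0 : 0 < y := by positivity
  have hD' : D = θ * x := by rw [hx]; field_simp
  have hM' : M = (1 - θ) * y := by rw [hy]; field_simp
  have := h (y / x) (by positivity)
  refine this.trans_eq ?_
  have e : y / x * D + M = y := by rw [hD', hM']; field_simp; ring
  rw [e, Real.div_rpow hy0.le hx0.le, Real.rpow_neg hx0.le, Real.rpow_neg hy0.le, Real.rpow_sub hy0, Real.rpow_one]
  have : 0 < x ^ θ := by positivity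
  have : 0 < y ^ θ := by positivity
  field_simp

lemma amgm {θ D M : ℝ} (h0 : 0 < θ) (h1 : θ < 1) (hD : 0 < D) (hM : 0 < M) :
    (D / θ) ^ θ * (M / (1 - θ)) ^ (1 - θ) ≤ D + M := by
  have h1' : 0 < 1 - θ := by linarith
  have := Real.geom_mean_le_arith_mean2_weighted h0.le h1'.le (p₁ := D / θ) (p₂ := M / (1 - θ)) (by positivity) (by positivity) (by ring)
  refine this.trans_eq ?_
  field_simp

lemma quot_id {θ L m P I p : ℝ} (h0 : 0 < θ) (h1 : θ < 1) (hL : 0 < L) (hm : 0 < m) (hP : 0 ≤ P) (hI : 0 < I) (hp : 0 < p) :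
    P ^ p / (L ^ (p * θ) * m ^ (p * (1 - θ))) = 
      (I * P ^ 2 / ((L ^ 2 / θ) ^ θ * (m ^ 2 / (1 - θ)) ^ (1 - θ)) * ((1/θ) ^ θ * (1 / (1 - θ)) ^ (1 - θ) / I)) ^ (p / 2) := by
  have h1' : 0 < 1 - θ := by linarith
  have e : I * P ^ 2 / ((L ^ 2 / θ) ^ θ * (m ^ 2 / (1 - θ)) ^ (1 - θ)) * ((1/θ) ^ θ * (1 / (1 - θ)) ^ (1 - θ) / I)
      = P ^ 2 / ((L^2) ^ θ * (m^2) ^ (1 - θ)) := by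
    rw [div_eq_mul_one_div (L^2), div_eq_mul_one_div (m^2), Real.mul_rpow (by positivity) (by positivity),
      Real.mul_rpow (by positivity) (by positivity)]
    have a1 : 0 < (1/θ) ^ θ := by positivity
    have a2 : 0 < (1/(1-θ)) ^ (1-θ) := by positivity
    have a3 : 0 < (L^2) ^ θ := by positivity
    have a4 : 0 < (m^2) ^ (1-θ) := by positivity
    generalize (1/θ) ^ θ = b1 at *
    generalize (1/(1-θ)) ^ (1-θ) = b2 at *
    field_simp
  rw [e, Real.div_rpow (by positivity) (by positivity), Real.mul_rpow (by positivity) (by positivity)]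
  have e2 : ∀ z : ℝ, 0 ≤ z → (z^2) = z ^ (2:ℝ) := fun z hz => by simp
  rw [e2 P hP, e2 L hL.le, e2 m hm.le, ← Real.rpow_mul hP, ← Real.rpow_mul hL.le, ← Real.rpow_mul hm.le,
    ← Real.rpow_mul hL.le, ← Real.rpow_mul hm.le]
  congr 3 <;> ring_nf

lemma lapl_pos {N : ℕ} {p : ℝ} (hN : 1 ≤ N) (hp : SubC N p) {V : H2 N} (hV : 0 < rLp p V.u) : 0 < rLp 2 V.lapl := by
  refine (rLp_nonneg _ _).lt_of_ne fun h => ?_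
  set θ := (N:ℝ) * (1/2 - 1/p) / 2 with hθ
  have hs0 : 0 < 1/2 - 1/p := by
    rw [sub_pos]; exact one_div_lt_one_div_of_lt (by norm_num) hp.gt
  have hN' : (0:ℝ) < N := by exact_mod_cast hN
  have hθ0 : 0 < θ := by positivity
  have h1 : ∀ s : ℝ, 0 < s → Ip N p * rLp p V.u ^ 2 ≤ s ^ (-θ) * rLp 2 V.u ^ 2 := by
    intro s hs
    have := scal hp.gt V hs
    rw [← h, ← hθ] at this
    simpa using this
  have h2 : Tendsto (fun s : ℝ => s ^ (-θ) * rLp 2 V.u ^ 2) atTop (𝓝 (0 * rLp 2 V.u ^ 2)) :=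
    (tendsto_rpow_neg_atTop hθ0).mul_const _
  rw [zero_mul] at h2
  have h3 := ge_of_tendsto h2 ((eventually_gt_atTop 0).mono h1)
  have := Ip_pos hp
  have : 0 < Ip N p * rLp p V.u ^ 2 := by positivity
  linarith

lemma nontriv_of {N : ℕ} {p : ℝ} (hp : SubC N p) {V : H2 N} (hV : 0 < rLp p V.u) : V.Nontriv := by
  intro h
  rw [rLp, eLpNorm_congr_ae h] at hV
  simp at hV

lemma u_pos {N : ℕ} {V : H2 N} (hV : V.Nontriv) : 0 < rLp 2 V.u := by
  rw [rLp_two]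
  refine ENNReal.toReal_pos (fun h => hV ?_) V.u_mem.2.ne
  exact (eLpNorm_eq_zero_iff V.u_mem.1 (by simp)).1 h

lemma part_two {N : ℕ} {p : ℝ} (hN : 1 ≤ N) (hp : SubC N p) {θ : ℝ} (hθ : θ = (N:ℝ) * (1/2 - 1/p) / 2)
    (U : H2 N) (hU : rLp p U.u = 1) (hK : Kfun U = Ip N p) :
    IsGreatest {r : ℝ | ∃ V : H2 N, V.Nontriv ∧
      r = (∫ x, ‖V.u x‖ ^ p) / (rLp 2 V.lapl ^ (p * θ) * rLp 2 V.u ^ (p * (1 - θ)))}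
      ((∫ x, ‖U.u x‖ ^ p) / (rLp 2 U.lapl ^ (p * θ) * rLp 2 U.u ^ (p * (1 - θ)))) := by
  have hs0 : 0 < 1/2 - 1/p := by
    rw [sub_pos]; exact one_div_lt_one_div_of_lt (by norm_num) hp.gt
  have hN' : (0:ℝ) < N := by exact_mod_cast hN
  have hθ0 : 0 < θ := by rw [hθ]; positivity
  have hθ1 : θ < 1 := by rw [hθ]; linarith [hp.sub]
  have hθ1' : 0 < 1 - θ := by linarith
  have hI := Ip_pos hp
  have hp0 : 0 < p := by linarith [hp.gt]
  have hUpos : 0 < rLp p U.u := by rw [hU]; norm_num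
  have hUn := nontriv_of hp hUpos
  have main : ∀ V : H2 N, V.Nontriv → Ip N p * rLp p V.u ^ 2 ≤
      ((rLp 2 V.lapl) ^ 2 / θ) ^ θ * ((rLp 2 V.u) ^ 2 / (1 - θ)) ^ (1 - θ) := by
    intro V hV
    have a := lapl_pos hN hp (rLp_pos hp hV)
    have b := u_pos hV
    refine opt_s hθ0 hθ1 (by positivity) (by positivity) fun s hs => ?_
    rw [hθ]
    exact scal hp.gt V hs
  have aU := lapl_pos hN hp hUpos
  have bU := u_pos hUn
  have eqU : Ip N p * rLp p U.u ^ 2 =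
      ((rLp 2 U.lapl) ^ 2 / θ) ^ θ * ((rLp 2 U.u) ^ 2 / (1 - θ)) ^ (1 - θ) := by
    refine le_antisymm (main U hUn) ?_
    refine (amgm hθ0 hθ1 (by positivity) (by positivity)).trans_eq ?_
    rw [hU, ← lapSq_eq, ← massSq_eq]
    change Kfun U = _
    rw [hK]; ring
  refine ⟨⟨U, hUn, rfl⟩, ?_⟩
  rintro r ⟨V, hV, rfl⟩
  have a := lapl_pos hN hp (rLp_pos hp hV)
  have b := u_pos hV
  rw [rLp_pow hp0 (memLp_p hp V), rLp_pow hp0 (memLp_p hp U),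
    quot_id hθ0 hθ1 a b (rLp_nonneg _ _) hI hp0, quot_id hθ0 hθ1 aU bU (rLp_nonneg _ _) hI hp0]
  have := Ip_pos hp
  refine Real.rpow_le_rpow ?_ ?_ (by positivity)
  · have := rLp_nonneg p V.u
    positivity
  · refine mul_le_mul_of_nonneg_right ?_ (by positivity)
    rw [eqU, div_self (by positivity)]
    exact (div_le_one (by positivity)).2 (main V hV)
end

section
open scoped SchwartzMap LineDeriv FourierTransform ENNReal NNReal ComplexConjugate

/-- kernel of the frequency projection -/
def kern {N : ℕ} (A : Set (Esp N)) : Esp N → ℂ := 𝓕⁻ (A.indicator (fun _ => (1:ℂ)))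

lemma memLp_conj {N : ℕ} {p : ℝ≥0∞} {f : Esp N → ℂ} (hf : MemLp f p (volume : Measure (Esp N))) :
    MemLp (fun x => conj (f x)) p (volume : Measure (Esp N)) := by
  refine hf.of_le (Complex.continuous_conj.comp_aestronglyMeasurable hf.1) (Eventually.of_forall fun x => ?_)
  simp

lemma inner_toLp {N : ℕ} {f g : Esp N → ℂ} (hf : MemLp f 2 (volume : Measure (Esp N)))
    (hg : MemLp g 2 (volume : Measure (Esp N))) :
    inner ℂ (hf.toLp f) (hg.toLp g) = ∫ x, conj (f x) * g x := by
  rw [L2.inner_def]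
  refine integral_congr_ae ?_
  filter_upwards [hf.coeFn_toLp, hg.coeFn_toLp] with x h1 h2
  rw [h1, h2, RCLike.inner_apply, mul_comm]

/-- the modulated indicator -/
def modi {N : ℕ} (A : Set (Esp N)) (x : Esp N) : Esp N → ℂ :=
  A.indicator (fun ξ => ((Real.fourierChar (-inner ℝ ξ x) : Circle) : ℂ))

lemma modi_mem {N : ℕ} {A : Set (Esp N)} (hA : MeasurableSet A) (hAf : volume A ≠ ⊤) (x : Esp N) (p : ℝ≥0∞) :
    MemLp (modi A x) p (volume : Measure (Esp N)) := by
  have h1 : MemLp (A.indicator (fun _ : Esp N => (1:ℂ))) p (volume : Measure (Esp N)) :=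
    memLp_indicator_const p hA 1 (Or.inr hAf)
  refine h1.of_le ?_ (Eventually.of_forall fun ξ => ?_)
  · refine AEStronglyMeasurable.indicator ?_ hA
    refine Continuous.aestronglyMeasurable ?_
    exact continuous_subtype_val.comp (Real.continuous_fourierChar.comp (by fun_prop))
  · by_cases h : ξ ∈ A
    · simp only [modi, Set.indicator_of_mem h, Circle.norm_coe, norm_one, le_refl]
    · simp [modi, h]

lemma modi_inv {N : ℕ} (A : Set (Esp N)) (x y : Esp N) : 𝓕⁻ (modi A x) y = kern A (y - x) := by
  rw [kern, Real.fourierInv_eq, Real.fourierInv_eq]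
  congr 1
  funext ξ
  by_cases h : ξ ∈ A
  · simp only [modi, Set.indicator_of_mem h, Circle.smul_def, smul_eq_mul, mul_one]
    rw [inner_sub_right, sub_eq_add_neg, AddChar.map_add_eq_mul, Circle.coe_mul]
  · simp [modi, h]

lemma kern_mem {N : ℕ} {A : Set (Esp N)} (hA : MeasurableSet A) (hAf : volume A ≠ ⊤) (x : Esp N) :
    MemLp (fun y => conj (kern A (y - x))) 2 (volume : Measure (Esp N)) := by
  apply memLp_conj
  have h := fourierInv_compat (memLp_one_iff_integrable.1 (modi_mem hA hAf x 1)) (modi_mem hA hAf x 2)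
  refine MemLp.ae_eq ?_ (Lp.memLp (𝓕⁻ ((modi_mem hA hAf x 2).toLp _)))
  filter_upwards [h] with y hy
  rw [hy, modi_inv]

lemma proj_rep {N : ℕ} {A : Set (Esp N)} (hA : MeasurableSet A) (hAf : volume A ≠ ⊤)
    {f : Esp N → ℂ} (hf : MemLp f 2 (volume : Measure (Esp N))) (x : Esp N) :
    proj A (FT hf) x = ∫ y, f y * conj (kern A (y - x)) := by
  have hm := modi_mem hA hAf x 2
  have h := fourierInv_compat (memLp_one_iff_integrable.1 (modi_mem hA hAf x 1)) hm
  have h1 : inner ℂ (hm.toLp _) (FT hf) = ∫ y, f y * conj (kern A (y - x)) := by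
    have e : 𝓕 (𝓕⁻ (hm.toLp _) : Lp ℂ 2 (volume : Measure (Esp N))) = hm.toLp _ :=
      FourierTransform.fourier_fourierInv_eq _
    rw [FT, ← e, Lp.inner_fourier_eq, L2.inner_def]
    refine integral_congr_ae ?_
    filter_upwards [h, hf.coeFn_toLp] with y h1 h2
    rw [h1, h2, modi_inv, RCLike.inner_apply]
  rw [← h1, L2.inner_def, proj, Real.fourierInv_eq]
  refine integral_congr_ae ?_
  filter_upwards [hm.coeFn_toLp] with ξ hξ
  rw [hξ, RCLike.inner_apply]
  by_cases h : ξ ∈ A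
  · simp only [modi, Set.indicator_of_mem h, Circle.smul_def, smul_eq_mul]
    rw [AddChar.map_neg_eq_inv, Circle.coe_inv_eq_conj, Complex.conj_conj, mul_comm]
  · simp [modi, h]

lemma proj_trans {N : ℕ} {A : Set (Esp N)} (hA : MeasurableSet A) (hAf : volume A ≠ ⊤)
    (U : H2 N) (h : Esp N) :
    proj A (FT (U.trans h).u_mem) 0 = proj A (FT U.u_mem) h := by
  rw [proj_rep hA hAf, proj_rep hA hAf, ← integral_add_right_eq_self (fun y => U.u y * _) h]
  simp [H2.trans]

/-- weak convergence in `L²` -/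
def WL2 {N : ℕ} (f : ℕ → Esp N → ℂ) (g : Esp N → ℂ) : Prop :=
  ∀ k : Esp N → ℂ, MemLp k 2 (volume : Measure (Esp N)) →
    Tendsto (fun n => ∫ x, f n x * k x) atTop (𝓝 (∫ x, g x * k x))

lemma WL2.sub {N : ℕ} {f : ℕ → Esp N → ℂ} {g : Esp N → ℂ} (h : WL2 f g) {ψ : ℕ → ℕ} (hψ : StrictMono ψ) :
    WL2 (fun n => f (ψ n)) g := fun k hk => (h k hk).comp hψ.tendsto_atTop

lemma weak_compact {N : ℕ} (f : ℕ → Esp N → ℂ) (hf : ∀ n, MemLp (f n) 2 (volume : Measure (Esp N)))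
    (M : ℝ≥0∞) (hM : M ≠ ⊤) (hb : ∀ n, eLpNorm (f n) 2 volume ≤ M) :
    ∃ (ψ : ℕ → ℕ) (g : Esp N → ℂ), StrictMono ψ ∧ MemLp g 2 (volume : Measure (Esp N)) ∧
      WL2 (fun n => f (ψ n)) g := by
  let H := Lp ℂ 2 (volume : Measure (Esp N))
  let a : ℕ → H := fun n => (memLp_conj (hf n)).toLp _
  have ha : ∀ n, ‖a n‖ ≤ M.toReal := by
    intro n
    rw [Lp.norm_toLp]
    refine ENNReal.toReal_mono hM (le_trans (le_of_eq ?_) (hb n))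
    exact eLpNorm_congr_norm_ae (Eventually.of_forall fun x => by simp)
  let φ : ℕ → WeakDual ℂ H := fun n => StrongDual.toWeakDual (InnerProductSpace.toDual ℂ H (a n))
  have : Fact ((2:ℝ≥0∞) ≠ ⊤) := ⟨by simp⟩
  have hc := WeakDual.isSeqCompact_closedBall ℂ H 0 M.toReal
  have hmem : ∀ n, φ n ∈ (WeakDual.toStrongDual ⁻¹' Metric.closedBall (0 : StrongDual ℂ H) M.toReal) := by
    intro n
    simp only [Set.mem_preimage, mem_closedBall_zero_iff]
    show ‖InnerProductSpace.toDual ℂ H (a n)‖ ≤ _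
    rw [LinearIsometryEquiv.norm_map]
    exact ha n
  obtain ⟨Φ, -, ψ, hψ, hlim⟩ := hc hmem
  let b : H := (InnerProductSpace.toDual ℂ H).symm (WeakDual.toStrongDual Φ)
  refine ⟨ψ, fun x => conj ((b : Esp N → ℂ) x), hψ, memLp_conj (Lp.memLp b), fun k hk => ?_⟩
  have h1 := (WeakDual.eval_continuous (hk.toLp k : H)).tendsto Φ |>.comp hlim
  have e1 : ∀ n, φ n (hk.toLp k) = ∫ x, f n x * k x := by
    intro n
    show InnerProductSpace.toDual ℂ H (a n) (hk.toLp k) = _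
    rw [InnerProductSpace.toDual_apply_apply, inner_toLp]
    simp
  have e2 : Φ (hk.toLp k) = ∫ x, conj ((b : Esp N → ℂ) x) * k x := by
    have : Φ (hk.toLp k) = inner ℂ b (hk.toLp k) := by
      rw [← InnerProductSpace.toDual_apply_apply (𝕜 := ℂ), LinearIsometryEquiv.apply_symm_apply]
      rfl
    rw [this]
    conv_lhs => rw [← Lp.toLp_coeFn b (Lp.memLp b)]
    rw [inner_toLp]
  rw [← e2]
  refine h1.congr fun n => ?_
  rw [← e1]; rfl
end

section
open scoped ENNReal NNReal ComplexConjugate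

lemma weak_compact_fin {N : ℕ} {ι : Type} [DecidableEq ι] (f : ι → ℕ → Esp N → ℂ)
    (hf : ∀ i n, MemLp (f i n) 2 (volume : Measure (Esp N)))
    (M : ℝ≥0∞) (hM : M ≠ ⊤) (hb : ∀ i n, eLpNorm (f i n) 2 volume ≤ M) (s : Finset ι) :
    ∃ (ψ : ℕ → ℕ) (g : ι → Esp N → ℂ), StrictMono ψ ∧ ∀ i ∈ s, MemLp (g i) 2 (volume : Measure (Esp N)) ∧
      WL2 (fun n => f i (ψ n)) (g i) := by
  induction s using Finset.induction_on with
  | empty => exact ⟨id, fun _ => 0, strictMono_id, by simp⟩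
  | insert a s ha ih =>
    obtain ⟨ψ, g, hψ, hg⟩ := ih
    obtain ⟨ψ', g', hψ', hg', hw⟩ := weak_compact (fun n => f a (ψ n)) (fun n => hf _ _) M hM (fun n => hb _ _)
    refine ⟨ψ ∘ ψ', Function.update g a g', hψ.comp hψ', fun i hi => ?_⟩
    by_cases h : i = a
    · subst h
      simp only [Function.update_self]
      exact ⟨hg', hw⟩
    · have hi' : i ∈ s := (Finset.mem_insert.1 hi).resolve_left h
      simp only [Function.update_of_ne h]
      exact ⟨(hg i hi').1, (hg i hi').2.sub hψ'⟩

lemma weak_H2 {N : ℕ} (v : ℕ → H2 N) (M : ℝ≥0∞) (hM : M ≠ ⊤)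
    (h1 : ∀ n, eLpNorm (v n).u 2 volume ≤ M) (h2 : ∀ n, eLpNorm (v n).lapl 2 volume ≤ M) :
    ∃ (ψ : ℕ → ℕ) (U : H2 N), StrictMono ψ ∧ WL2 (fun n => (v (ψ n)).u) U.u ∧
      WL2 (fun n => (v (ψ n)).lapl) U.lapl := by
  let f : Option (Option (Fin N)) → ℕ → Esp N → ℂ := fun i n =>
    match i with
    | none => (v n).u
    | some none => (v n).lapl
    | some (some i) => (v n).grad i
  obtain ⟨ψ, g, hψ, hg⟩ := weak_compact_fin f (by
      rintro (_ | _ | i) n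
      · exact (v n).u_mem
      · exact (v n).lapl_mem
      · exact (v n).grad_mem i) (M + M) (by simp [hM]) (by
      rintro (_ | _ | i) n
      · exact (h1 n).trans le_self_add
      · exact (h2 n).trans le_self_add
      · exact (grad_bound (v n) i).trans (add_le_add (h1 n) (h2 n))) Finset.univ
  have hu := hg none (Finset.mem_univ _)
  have hl := hg (some none) (Finset.mem_univ _)
  have hd := fun i => hg (some (some i)) (Finset.mem_univ _)
  refine ⟨ψ, ⟨g none, fun i => g (some (some i)), g (some none), hu.1, fun i => (hd i).1, hl.1, ?_, ?_⟩, hψ, hu.2, hl.2⟩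
  · intro i φ hφ
    refine tendsto_nhds_unique (hu.2 _ (hφ.pd i).memLp) ?_
    refine ((hd i).2 _ hφ.memLp).neg.congr fun n => ?_
    exact ((v (ψ n)).grad_spec i φ hφ).symm
  · intro φ hφ
    refine tendsto_nhds_unique (hu.2 _ hφ.lap.memLp) ?_
    refine (hl.2 _ hφ.memLp).congr fun n => ?_
    exact ((v (ψ n)).lapl_spec φ hφ).symm

lemma WL2.split {N : ℕ} {f : ℕ → Esp N → ℂ} {g : Esp N → ℂ} (h : WL2 f g)
    (hf : ∀ n, MemLp (f n) 2 (volume : Measure (Esp N))) (hg : MemLp g 2 (volume : Measure (Esp N))) :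
    Tendsto (fun n => (∫ x, ‖f n x‖ ^ 2) - ∫ x, ‖f n x - g x‖ ^ 2) atTop (𝓝 (∫ x, ‖g x‖ ^ 2)) := by
  have h1 := (Complex.continuous_re.tendsto _).comp (h _ (memLp_conj hg))
  have i1 : ∀ n, Integrable (fun x => f n x * conj (g x)) := fun n => int_mul_L2 (hf n) (memLp_conj hg)
  have i2 : ∀ n, Integrable (fun x => ‖f n x‖ ^ 2) := fun n => (memLp_two_iff_integrable_sq_norm (hf n).1).1 (hf n)
  have i3 : Integrable (fun x => ‖g x‖ ^ 2) := (memLp_two_iff_integrable_sq_norm hg.1).1 hg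
  have e2 : (∫ x, g x * conj (g x)).re = ∫ x, ‖g x‖ ^ 2 := by
    rw [← Complex.ofReal_re (∫ x, ‖g x‖ ^ 2), ← integral_complex_ofReal]
    congr 2; funext x
    rw [Complex.mul_conj']
    push_cast; rfl
  have e1 : ∀ n, (∫ x, ‖f n x‖ ^ 2) - ∫ x, ‖f n x - g x‖ ^ 2 =
      2 * (∫ x, f n x * conj (g x)).re - ∫ x, ‖g x‖ ^ 2 := by
    intro n
    have i1' : Integrable (fun x => (f n x * conj (g x)).re) := (i1 n).re
    have e3 : (∫ x, f n x * conj (g x)).re = ∫ x, (f n x * conj (g x)).re :=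
      (integral_re (i1 n)).symm
    have e4 : ∀ x, ‖f n x - g x‖ ^ 2 = ‖f n x‖ ^ 2 + ‖g x‖ ^ 2 - 2 * (f n x * conj (g x)).re := by
      intro x
      rw [← Complex.normSq_eq_norm_sq, ← Complex.normSq_eq_norm_sq, ← Complex.normSq_eq_norm_sq, Complex.normSq_sub]
    simp only [e4]
    have i4 : Integrable (fun x => ‖f n x‖ ^ 2 + ‖g x‖ ^ 2) := (i2 n).add i3
    rw [integral_sub i4 (i1'.const_mul 2), integral_add (i2 n) i3, integral_const_mul, e3]
    ring
  have h2 := (h1.const_mul 2).sub_const (∫ x, ‖g x‖ ^ 2)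
  simp only [Function.comp_def] at h2
  rw [e2] at h2
  refine (h2.congr fun n => (e1 n).symm).trans ?_
  apply le_of_eq; congr 1; ring

lemma K_split {N : ℕ} {v : ℕ → H2 N} {U : H2 N} (h1 : WL2 (fun n => (v n).u) U.u)
    (h2 : WL2 (fun n => (v n).lapl) U.lapl) :
    Tendsto (fun n => Kfun (v n) - Kfun ((v n).sub U)) atTop (𝓝 (Kfun U)) := by
  have a := h1.split (fun n => (v n).u_mem) U.u_mem
  have b := h2.split (fun n => (v n).lapl_mem) U.lapl_mem
  refine (b.add a).congr fun n => ?_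
  simp only [Kfun, H2.massSq, H2.lapSq, H2.sub, Pi.sub_apply]
  ring

/-- choice of a frequency radius -/
lemma exists_R {N : ℕ} {p : ℝ} (hp : SubC N p) (M ε : ℝ≥0∞) (hM : M ≠ ⊤) (hε : 0 < ε) :
    ∃ R : ℝ, 0 < R ∧ ∀ U : H2 N, eLpNorm U.lapl 2 volume ≤ M →
      eLpNorm (fun x => U.u x - proj (Metric.ball 0 R) (FT U.u_mem) x) (ENNReal.ofReal p) volume ≤ ε := by
  obtain ⟨C, hC, h⟩ := tail_Lp N hp.gt hp.sub
  set d := (N : ℝ) * (1/2 - 1/p) - 2 with hd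
  have hd0 : 0 < -d := by linarith [hp.sub]
  have h1 := ENNReal.tendsto_ofReal (tendsto_rpow_neg_atTop hd0)
  rw [neg_neg, ENNReal.ofReal_zero] at h1
  have h2 : Tendsto (fun R : ℝ => C * ENNReal.ofReal (R ^ d) * M) atTop (𝓝 (C * 0 * M)) :=
    ENNReal.Tendsto.mul_const (ENNReal.Tendsto.const_mul h1 (Or.inr hC)) (Or.inr hM)
  simp only [mul_zero, zero_mul] at h2
  obtain ⟨R, hR1, hR2⟩ := ((ENNReal.tendsto_nhds_zero.1 h2 ε hε).and (eventually_gt_atTop 0)).exists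
  refine ⟨R, hR2, fun U hU => (h U R hR2).trans (le_trans ?_ hR1)⟩
  gcongr

lemma ind_le {N : ℕ} (U : H2 N) (A : Set (Esp N)) :
    eLpNorm (A.indicator (FT U.u_mem)) 2 volume ≤ eLpNorm U.u 2 volume := by
  rw [← FT_eLpNorm U.u_mem]
  exact eLpNorm_indicator_le _

lemma one_le_p {N : ℕ} {p : ℝ} (hp : SubC N p) : (1:ℝ≥0∞) ≤ ENNReal.ofReal p := by
  rw [← ENNReal.ofReal_one]; exact ENNReal.ofReal_le_ofReal (by linarith [hp.gt])

lemma proj_cont' {N : ℕ} (U : H2 N) (R : ℝ) : Continuous (proj (Metric.ball 0 R) (FT U.u_mem)) :=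
  proj_cont measurableSet_ball (vol_ball_ne_top R) (Lp.memLp _)

lemma nonvanish {N : ℕ} {p : ℝ} (hp : SubC N p) (M : ℝ≥0∞) (hM : M ≠ ⊤) :
    ∃ R δ : ℝ, 0 < R ∧ 0 < δ ∧ ∀ U : H2 N, eLpNorm U.u 2 volume ≤ M → eLpNorm U.lapl 2 volume ≤ M →
      1 / 2 ≤ rLp p U.u → ∃ x, δ ≤ ‖proj (Metric.ball 0 R) (FT U.u_mem) x‖ := by
  obtain ⟨R, hR, hT⟩ := exists_R hp M (ENNReal.ofReal (1/4)) hM (by simp)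
  have hp0 : 0 < p := by linarith [hp.gt]
  have h2p : 0 < 1 - 2/p := by
    rw [sub_pos, div_lt_one hp0]; exact hp.gt
  have h2p' : 0 ≤ 2/p := by positivity
  have h1 : Tendsto (fun δ : ℝ≥0 => ((δ : ℝ≥0∞)) ^ (1 - 2/p) * M ^ (2/p)) (𝓝[>] 0) (𝓝 (0 * M ^ (2/p))) := by
    refine ENNReal.Tendsto.mul_const ?_ (Or.inr (ENNReal.rpow_ne_top_of_nonneg h2p' hM))
    have := (ENNReal.continuous_rpow_const (y := 1 - 2/p)).comp ENNReal.continuous_coe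
    have h := this.tendsto 0
    simp only [Function.comp_def, ENNReal.coe_zero, ENNReal.zero_rpow_of_pos h2p] at h
    exact h.mono_left nhdsWithin_le_nhds
  rw [zero_mul] at h1
  have h8 : (0:ℝ≥0∞) < ENNReal.ofReal (1/8) := by simp
  obtain ⟨δ, hδ1, hδ2⟩ := ((ENNReal.tendsto_nhds_zero.1 h1 _ h8).and self_mem_nhdsWithin).exists
  refine ⟨R, δ, hR, hδ2, fun U hU hL hu => ?_⟩
  by_contra hcon
  push Not at hcon
  have hsup : ∀ᵐ x ∂(volume : Measure (Esp N)), ‖proj (Metric.ball 0 R) (FT U.u_mem) x‖ₑ ≤ δ :=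
    Eventually.of_forall fun x => by
      rw [enorm_eq_nnnorm]
      have := (hcon x).le
      exact_mod_cast this
  have hi := interp_sup hp.gt hsup
  have h3 : eLpNorm (proj (Metric.ball 0 R) (FT U.u_mem)) 2 volume ≤ M := by
    rw [proj_eLpNorm measurableSet_ball (vol_ball_ne_top R) (Lp.memLp _)]
    exact (ind_le U _).trans hU
  have h4 : eLpNorm (proj (Metric.ball 0 R) (FT U.u_mem)) (ENNReal.ofReal p) volume ≤ ENNReal.ofReal (1/8) := by
    refine (hi.trans ?_).trans hδ1
    gcongr
  have e : U.u = (fun x => U.u x - proj (Metric.ball 0 R) (FT U.u_mem) x) + proj (Metric.ball 0 R) (FT U.u_mem) := by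
    funext x; simp
  have h5 : eLpNorm U.u (ENNReal.ofReal p) volume ≤ ENNReal.ofReal (1/4) + ENNReal.ofReal (1/8) := by
    conv_lhs => rw [e]
    exact (eLpNorm_add_le (U.u_mem.1.sub (proj_cont' U R).aestronglyMeasurable) (proj_cont' U R).aestronglyMeasurable (one_le_p hp)).trans
      (add_le_add (hT U hL) h4)
  rw [← ENNReal.ofReal_add (by norm_num) (by norm_num)] at h5
  have h6 : rLp p U.u ≤ 1/4 + 1/8 := by
    rw [rLp]
    exact ENNReal.toReal_le_of_le_ofReal (by norm_num) h5
  linarith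

lemma local_conv {N : ℕ} {p : ℝ} (hp : SubC N p) (M : ℝ≥0∞) (hM : M ≠ ⊤) (w : ℕ → H2 N)
    (h1 : ∀ n, eLpNorm (w n).u 2 volume ≤ M) (h2 : ∀ n, eLpNorm (w n).lapl 2 volume ≤ M)
    (hw : WL2 (fun n => (w n).u) 0) {s : Set (Esp N)} (hsf : volume s < ⊤) :
    Tendsto (fun n => eLpNorm (w n).u (ENNReal.ofReal p) (volume.restrict s)) atTop (𝓝 0) := by
  have hp0 : 0 < p := by linarith [hp.gt]
  have hpne : ENNReal.ofReal p ≠ 0 := by simpa using hp0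
  rw [ENNReal.tendsto_nhds_zero]
  intro ε hε
  have hε2 : 0 < ε / 2 := ENNReal.half_pos hε.ne'
  obtain ⟨R, hR, hT⟩ := exists_R hp M (ε / 2) hM hε2
  let q : ℕ → Esp N → ℂ := fun n => proj (Metric.ball 0 R) (FT (w n).u_mem)
  have hqc : ∀ n, Continuous (q n) := fun n => proj_cont' (w n) R
  have hq0 : ∀ x, Tendsto (fun n => q n x) atTop (𝓝 0) := by
    intro x
    have := hw _ (kern_mem measurableSet_ball (vol_ball_ne_top R) x)
    simp only [Pi.zero_apply, zero_mul, integral_zero] at this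
    refine this.congr fun n => ?_
    exact (proj_rep measurableSet_ball (vol_ball_ne_top R) (w n).u_mem x).symm
  let B : ℝ≥0∞ := volume (Metric.ball (0:Esp N) R) ^ (1/2 : ℝ) * M
  have hB : B ≠ ⊤ := ENNReal.mul_ne_top (ENNReal.rpow_ne_top_of_nonneg (by norm_num) (vol_ball_ne_top R)) hM
  have hqB : ∀ n x, ‖q n x‖ₑ ≤ B := by
    intro n x
    refine (proj_sup measurableSet_ball (vol_ball_ne_top R) (Lp.memLp _) x).trans ?_
    have := (ind_le (w n) (Metric.ball 0 R)).trans (h1 n)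
    simp only [B]
    gcongr
  have hq : Tendsto (fun n => eLpNorm (q n) (ENNReal.ofReal p) (volume.restrict s)) atTop (𝓝 0) := by
    simp only [eLpNorm_eq_lintegral_rpow_enorm_toReal hpne ENNReal.ofReal_ne_top, ENNReal.toReal_ofReal hp0.le]
    have hl : Tendsto (fun n => ∫⁻ x in s, ‖q n x‖ₑ ^ p) atTop (𝓝 (∫⁻ x in s, 0)) := by
      refine tendsto_lintegral_of_dominated_convergence (fun _ => B ^ p) (fun n => ?_) (fun n => ?_) ?_ ?_
      · exact (hqc n).measurable.enorm.pow_const p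
      · exact Eventually.of_forall fun x => ENNReal.rpow_le_rpow (hqB n x) hp0.le
      · rw [lintegral_const, Measure.restrict_apply_univ]
        exact ENNReal.mul_ne_top (ENNReal.rpow_ne_top_of_nonneg hp0.le hB) hsf.ne
      · refine Eventually.of_forall fun x => ?_
        have a := (continuous_enorm.tendsto _).comp (hq0 x)
        have b := ((ENNReal.continuous_rpow_const (y := p)).tendsto _).comp a
        simpa [Function.comp_def, ENNReal.zero_rpow_of_pos hp0] using b
    rw [lintegral_zero] at hl
    have b := ((ENNReal.continuous_rpow_const (y := 1/p)).tendsto _).comp hl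
    rw [ENNReal.zero_rpow_of_pos (by positivity)] at b
    exact b
  filter_upwards [ENNReal.tendsto_nhds_zero.1 hq (ε/2) hε2] with n hn
  have e : (w n).u = (fun x => (w n).u x - q n x) + q n := by
    funext x; simp
  conv_lhs => rw [e]
  refine (eLpNorm_add_le ((w n).u_mem.1.sub (hqc n).aestronglyMeasurable).restrict (hqc n).aestronglyMeasurable (one_le_p hp)).trans ?_
  rw [← ENNReal.add_halves ε]
  exact add_le_add ((eLpNorm_restrict_le _ _ _ _).trans (hT (w n) (h2 n))) hn
end

section
open scoped ENNReal NNReal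

lemma piece_norm {N : ℕ} {p : ℝ} (hp0 : 0 < p) {f g h : Esp N → ℂ}
    (hf : AEStronglyMeasurable f (volume : Measure (Esp N)))
    (hh : ∀ x, h x = f x ∨ h x = g x) :
    eLpNorm h (ENNReal.ofReal p) volume ≤
      (eLpNorm f (ENNReal.ofReal p) volume ^ p + eLpNorm g (ENNReal.ofReal p) volume ^ p) ^ (1 / p) := by
  have hpne : ENNReal.ofReal p ≠ 0 := by simpa using hp0
  simp only [eLpNorm_eq_lintegral_rpow_enorm_toReal hpne ENNReal.ofReal_ne_top, ENNReal.toReal_ofReal hp0.le]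
  rw [← ENNReal.rpow_mul, ← ENNReal.rpow_mul, one_div, inv_mul_cancel₀ hp0.ne', ENNReal.rpow_one, ENNReal.rpow_one,
    ← lintegral_add_left' (hf.enorm.pow_const p)]
  refine ENNReal.rpow_le_rpow (lintegral_mono fun x => ?_) (by positivity)
  rcases hh x with e | e
  · simp only [e]; exact le_self_add
  · simp only [e]; exact le_add_self

lemma BL_ineq {N : ℕ} {p : ℝ} (hp : SubC N p) (U V : H2 N) {s : Set (Esp N)} (hs : MeasurableSet s) :
    eLpNorm V.u (ENNReal.ofReal p) volume ≤
      (eLpNorm U.u (ENNReal.ofReal p) volume ^ p + eLpNorm (V.sub U).u (ENNReal.ofReal p) volume ^ p) ^ (1 / p)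
      + (eLpNorm (V.sub U).u (ENNReal.ofReal p) (volume.restrict s)
        + eLpNorm (sᶜ.indicator U.u) (ENNReal.ofReal p) volume) := by
  have hp0 : 0 < p := by linarith [hp.gt]
  set w := (V.sub U).u with hw
  have hwm : AEStronglyMeasurable w volume := (V.sub U).u_mem.1
  have hUm := U.u_mem.1
  let a : Esp N → ℂ := s.indicator U.u + sᶜ.indicator w
  let b : Esp N → ℂ := s.indicator w
  let c : Esp N → ℂ := sᶜ.indicator U.u
  have e : V.u = a + (b + c) := by
    funext x
    have : w x = V.u x - U.u x := rfl
    by_cases hx : x ∈ s <;> simp [a, b, c, hx, this]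
  have ha : AEStronglyMeasurable a volume := (hUm.indicator hs).add (hwm.indicator hs.compl)
  have hb : AEStronglyMeasurable b volume := hwm.indicator hs
  have hc : AEStronglyMeasurable c volume := hUm.indicator hs.compl
  rw [e]
  refine (eLpNorm_add_le ha (hb.add hc) (one_le_p hp)).trans ?_
  refine add_le_add (piece_norm hp0 hUm fun x => ?_) ((eLpNorm_add_le hb hc (one_le_p hp)).trans ?_)
  · by_cases hx : x ∈ s <;> simp [a, hx]
  · simp only [b, c]
    rw [eLpNorm_indicator_eq_eLpNorm_restrict hs]

lemma ofReal_rLp {N : ℕ} {p : ℝ} (hp : SubC N p) (U : H2 N) :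
    eLpNorm U.u (ENNReal.ofReal p) volume = ENNReal.ofReal (rLp p U.u) := by
  rw [rLp, ENNReal.ofReal_toReal (memLp_p hp U).2.ne]

lemma BL_limit {N : ℕ} {p : ℝ} (hp : SubC N p) (v : ℕ → H2 N) (U : H2 N) {β : ℝ}
    (hloc : ∀ s : Set (Esp N), volume s < ⊤ →
      Tendsto (fun n => eLpNorm ((v n).sub U).u (ENNReal.ofReal p) (volume.restrict s)) atTop (𝓝 0))
    (hv : Tendsto (fun n => rLp p (v n).u) atTop (𝓝 1))
    (hw : Tendsto (fun n => rLp p ((v n).sub U).u) atTop (𝓝 β)) :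
    1 ≤ rLp p U.u ^ p + β ^ p := by
  have hp0 : 0 < p := by linarith [hp.gt]
  have hβ : 0 ≤ β := ge_of_tendsto' hw fun n => rLp_nonneg _ _
  set α := rLp p U.u with hα
  have hα0 : 0 ≤ α := rLp_nonneg _ _
  have key : (1:ℝ≥0∞) ≤ (ENNReal.ofReal α ^ p + ENNReal.ofReal β ^ p) ^ (1 / p) := by
    refine ENNReal.le_of_forall_pos_le_add fun ε hε _ => ?_
    obtain ⟨s, hs, hsf, hsε⟩ := (memLp_p hp U).exists_eLpNorm_indicator_compl_lt ENNReal.ofReal_ne_top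
      (ε := (ε : ℝ≥0∞)) (by exact_mod_cast hε.ne')
    have h1 := ENNReal.tendsto_ofReal hv
    rw [ENNReal.ofReal_one] at h1
    have h2 := ENNReal.tendsto_ofReal hw
    have h3 := ((ENNReal.continuous_rpow_const (y := p)).tendsto _).comp h2
    have h4 := ((ENNReal.continuous_rpow_const (y := 1/p)).tendsto _).comp (tendsto_const_nhds (x := ENNReal.ofReal α ^ p) |>.add h3)
    have h5 := h4.add ((hloc s hsf).add (tendsto_const_nhds (x := (ε : ℝ≥0∞))))
    rw [zero_add] at h5
    refine le_of_tendsto_of_tendsto' h1 h5 fun n => ?_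
    have := BL_ineq hp U (v n) hs
    rw [ofReal_rLp hp, ofReal_rLp hp, ofReal_rLp hp] at this
    refine this.trans ?_
    simp only [Function.comp_def]
    gcongr
  have e : (ENNReal.ofReal α ^ p + ENNReal.ofReal β ^ p) ^ (1 / p) = ENNReal.ofReal ((α ^ p + β ^ p) ^ (1/p)) := by
    rw [ENNReal.ofReal_rpow_of_nonneg hα0 hp0.le, ENNReal.ofReal_rpow_of_nonneg hβ hp0.le,
      ← ENNReal.ofReal_add (by positivity) (by positivity), ENNReal.ofReal_rpow_of_nonneg (by positivity) (by positivity)]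
  rw [e, ENNReal.one_le_ofReal] at key
  by_contra hlt
  push Not at hlt
  have := Real.rpow_lt_one (by positivity) hlt (by positivity : 0 < 1/p)
  linarith

lemma endgame {p α β I k : ℝ} (hp : 2 < p) (hα : 0 < α) (hβ : 0 ≤ β) (hI : 0 < I)
    (h1 : 1 ≤ α ^ p + β ^ p) (h2 : I * α ^ 2 ≤ k) (h3 : I * β ^ 2 ≤ I - k) : α = 1 ∧ k = I := by
  have hsum : α ^ 2 + β ^ 2 ≤ 1 := by
    by_contra h
    push Not at h
    nlinarith
  have hα1 : α ≤ 1 := by nlinarith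
  have hβ1 : β ≤ 1 := by nlinarith
  have hβp : β ^ p ≤ β ^ 2 := by
    rcases hβ.eq_or_lt with h | h
    · rw [← h, Real.zero_rpow (by linarith)]; simp
    · rw [← Real.rpow_two]
      exact Real.rpow_le_rpow_of_exponent_ge h hβ1 hp.le
  have hα' : α = 1 := by
    by_contra hne
    have hlt : α < 1 := lt_of_le_of_ne hα1 hne
    have : α ^ p < α ^ 2 := by
      rw [← Real.rpow_two]
      exact Real.rpow_lt_rpow_of_exponent_gt hα hlt hp
    linarith
  subst hα'
  refine ⟨rfl, ?_⟩
  nlinarith [sq_nonneg β]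

lemma K_bound {N : ℕ} {U : H2 N} {k : ℝ} (h : Kfun U ≤ k) :
    eLpNorm U.u 2 volume ≤ ENNReal.ofReal (Real.sqrt k) ∧ eLpNorm U.lapl 2 volume ≤ ENNReal.ofReal (Real.sqrt k) := by
  have h1 := massSq_nonneg U
  have h2 := lapSq_nonneg U
  rw [Kfun] at h
  constructor
  · rw [← ENNReal.ofReal_toReal U.u_mem.2.ne, ← rLp_two]
    refine ENNReal.ofReal_le_ofReal (Real.le_sqrt_of_sq_le ?_)
    rw [← massSq_eq]; linarith
  · rw [← ENNReal.ofReal_toReal U.lapl_mem.2.ne, ← rLp_two]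
    refine ENNReal.ofReal_le_ofReal (Real.le_sqrt_of_sq_le ?_)
    rw [← lapSq_eq]; linarith

lemma part_one {N : ℕ} {p : ℝ} (hp : SubC N p) (u : ℕ → H2 N)
    (hu : Tendsto (fun n => rLp p (u n).u) atTop (𝓝 1))
    (hK : Tendsto (fun n => Kfun (u n)) atTop (𝓝 (Ip N p))) :
    ∃ (ψ : ℕ → ℕ) (xs : ℕ → Esp N) (U : H2 N), StrictMono ψ ∧
        rLp p U.u = 1 ∧ Kfun U = Ip N p ∧ H2TendstoTrans (fun k => u (ψ k)) xs U := by
  have hI := Ip_pos hp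
  have ev : ∀ᶠ n in atTop, 1/2 ≤ rLp p (u n).u ∧ Kfun (u n) ≤ Ip N p + 1 :=
    (hu.eventually (Ici_mem_nhds (by norm_num))).and (hK.eventually (Iic_mem_nhds (by linarith)))
  obtain ⟨n0, hn0⟩ := eventually_atTop.1 ev
  set M := ENNReal.ofReal (Real.sqrt (Ip N p + 1)) with hM
  have hMf : M ≠ ⊤ := ENNReal.ofReal_ne_top
  obtain ⟨R, δ, hR, hδ, hnv⟩ := nonvanish hp M hMf
  have hx : ∀ n, ∃ x, δ ≤ ‖proj (Metric.ball 0 R) (FT (u (n + n0)).u_mem) x‖ := fun n =>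
    have h := hn0 (n + n0) (by omega)
    hnv _ (K_bound h.2).1 (K_bound h.2).2 h.1
  choose x hx using hx
  let v : ℕ → H2 N := fun n => (u (n + n0)).trans (x n)
  have hvK : ∀ n, Kfun (v n) = Kfun (u (n + n0)) := fun n => Kfun_trans _ _
  have hvp : ∀ n, rLp p (v n).u = rLp p (u (n + n0)).u := fun n => rLp_trans _ _ (u (n + n0)).u_mem.1
  have hvb : ∀ n, Kfun (v n) ≤ Ip N p + 1 := fun n => by
    rw [hvK]; exact (hn0 (n + n0) (by omega)).2
  obtain ⟨ψ, U, hψ, hwu, hwl⟩ := weak_H2 v M hMf (fun n => (K_bound (hvb n)).1) (fun n => (K_bound (hvb n)).2)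
  -- second subsequence
  let w : ℕ → H2 N := fun n => (v (ψ n)).sub U
  set M2 : ℝ≥0∞ := M + (eLpNorm U.u 2 volume + eLpNorm U.lapl 2 volume) with hM2
  have hM2f : M2 ≠ ⊤ := by
    rw [hM2]
    exact ENNReal.add_ne_top.2 ⟨hMf, ENNReal.add_ne_top.2 ⟨U.u_mem.2.ne, U.lapl_mem.2.ne⟩⟩
  have hw1 : ∀ n, eLpNorm (w n).u 2 volume ≤ M2 := fun n =>
    (eLpNorm_sub_le (v (ψ n)).u_mem.1 U.u_mem.1 (by norm_num)).trans
      (add_le_add (K_bound (hvb _)).1 le_self_add)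
  have hw2 : ∀ n, eLpNorm (w n).lapl 2 volume ≤ M2 := fun n =>
    (eLpNorm_sub_le (v (ψ n)).lapl_mem.1 U.lapl_mem.1 (by norm_num)).trans
      (add_le_add (K_bound (hvb _)).2 le_add_self)
  have hw0 : WL2 (fun n => (w n).u) 0 := by
    intro k hk
    have := (hwu k hk).sub_const (∫ x, U.u x * k x)
    simp only [sub_self] at this
    simp only [Pi.zero_apply, zero_mul, integral_zero]
    refine this.congr fun n => ?_
    rw [← integral_sub (int_mul_L2 (v (ψ n)).u_mem hk) (int_mul_L2 U.u_mem hk)]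
    congr 1; funext y
    simp only [w, H2.sub, Pi.sub_apply]; ring
  obtain ⟨C, hC, hCe⟩ := embed N hp.gt hp.sub
  have hwb : ∀ n, rLp p (w n).u ∈ Set.Icc 0 (C * (M2 + M2)).toReal := fun n =>
    ⟨rLp_nonneg _ _, ENNReal.toReal_mono (ENNReal.mul_ne_top hC (by simp [hM2f]))
      ((hCe (w n)).trans (by gcongr; exacts [hw1 n, hw2 n]))⟩
  obtain ⟨β, hβmem, ψ2, hψ2, hβ⟩ := isCompact_Icc.tendsto_subseq hwb
  simp only [Function.comp_def] at hβ
  let φ : ℕ → ℕ := fun n => ψ (ψ2 n) + n0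
  have hψψ : StrictMono fun n => ψ (ψ2 n) := hψ.comp hψ2
  have hφ : StrictMono φ := fun a b h => by
    have := hψψ h
    simp only [φ]; simp only at this; omega
  have hKφ : Tendsto (fun n => Kfun (v (ψ (ψ2 n)))) atTop (𝓝 (Ip N p)) :=
    (hK.comp hφ.tendsto_atTop).congr fun n => (hvK _).symm
  have huφ : Tendsto (fun n => rLp p (v (ψ (ψ2 n))).u) atTop (𝓝 1) :=
    (hu.comp hφ.tendsto_atTop).congr fun n => (hvp _).symm
  have hBL := BL_limit hp (fun n => v (ψ (ψ2 n))) U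
    (fun s hs => (local_conv hp M2 hM2f w hw1 hw2 hw0 hs).comp hψ2.tendsto_atTop) huφ hβ
  have hsplit : Tendsto (fun n => Kfun (v (ψ (ψ2 n))) - Kfun (w (ψ2 n))) atTop (𝓝 (Kfun U)) :=
    (K_split hwu hwl).comp hψ2.tendsto_atTop
  have hKw : Tendsto (fun n => Kfun (w (ψ2 n))) atTop (𝓝 (Ip N p - Kfun U)) :=
    (hKφ.sub hsplit).congr fun n => by ring
  have h3 : Ip N p * β ^ 2 ≤ Ip N p - Kfun U :=
    le_of_tendsto_of_tendsto' ((hβ.pow 2).const_mul _) hKw fun n => Ip_mul_le _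
  -- nontriviality
  have hproj : Tendsto (fun n => proj (Metric.ball 0 R) (FT (v (ψ n)).u_mem) 0) atTop
      (𝓝 (proj (Metric.ball 0 R) (FT U.u_mem) 0)) := by
    rw [proj_rep measurableSet_ball (vol_ball_ne_top R)]
    refine (hwu _ (kern_mem measurableSet_ball (vol_ball_ne_top R) 0)).congr fun n => ?_
    rw [proj_rep measurableSet_ball (vol_ball_ne_top R)]
  have hproj2 : δ ≤ ‖proj (Metric.ball 0 R) (FT U.u_mem) 0‖ := by
    refine ge_of_tendsto' hproj.norm fun n => ?_
    rw [proj_trans measurableSet_ball (vol_ball_ne_top R)]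
    exact hx _
  have hUn : U.Nontriv := by
    intro h0
    have : proj (Metric.ball 0 R) (FT U.u_mem) 0 = 0 := by
      rw [proj_rep measurableSet_ball (vol_ball_ne_top R)]
      refine integral_eq_zero_of_ae ?_
      filter_upwards [h0] with y hy
      rw [hy]; simp
    rw [this, norm_zero] at hproj2
    linarith
  obtain ⟨hα, hKU⟩ := endgame hp.gt (rLp_pos hp hUn) hβmem.1 hI hBL (Ip_mul_le U) h3
  refine ⟨φ, fun n => x (ψ (ψ2 n)), U, hφ, hα, hKU, ?_⟩
  rw [hKU, sub_self] at hKw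
  have hs : Tendsto (fun n => ENNReal.ofReal (Real.sqrt (Kfun (w (ψ2 n))))) atTop (𝓝 0) := by
    have := ENNReal.tendsto_ofReal ((Real.continuous_sqrt.tendsto _).comp hKw)
    simpa [Function.comp_def] using this
  have t1 : Tendsto (fun n => eLpNorm (w (ψ2 n)).u 2 volume) atTop (𝓝 0) :=
    tendsto_of_tendsto_of_tendsto_of_le_of_le tendsto_const_nhds hs (fun _ => zero_le) fun n => (K_bound le_rfl).1
  have t2 : Tendsto (fun n => eLpNorm (w (ψ2 n)).lapl 2 volume) atTop (𝓝 0) :=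
    tendsto_of_tendsto_of_tendsto_of_le_of_le tendsto_const_nhds hs (fun _ => zero_le) fun n => (K_bound le_rfl).2
  refine ⟨t1, fun i => ?_, t2⟩
  have t3 := t1.add t2
  rw [add_zero] at t3
  exact tendsto_of_tendsto_of_tendsto_of_le_of_le tendsto_const_nhds t3 (fun _ => zero_le)
    fun n => grad_bound (w (ψ2 n)) i

lemma subC_of {N : ℕ} {σ : ℝ}
    (hσ : (N ≤ 4 ∧ 0 < σ) ∨ (5 ≤ N ∧ 0 < σ ∧ 2 * σ + 2 < 2 * (N : ℝ) / ((N : ℝ) - 4))) :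
    SubC N (2 * σ + 2) := by
  have h0 : 0 < σ := by rcases hσ with h | h; exacts [h.2, h.2.1]
  refine ⟨by linarith, ?_⟩
  have e : (N:ℝ) * (1/2 - 1/(2*σ+2)) = N * σ / (2 * σ + 2) := by
    field_simp; ring
  rw [e, div_lt_iff₀ (by linarith)]
  rcases hσ with ⟨h, _⟩ | ⟨h, _, h2⟩
  · have : (N:ℝ) ≤ 4 := by exact_mod_cast h
    nlinarith
  · have h4 : (5:ℝ) ≤ N := by exact_mod_cast h
    rw [lt_div_iff₀ (by linarith)] at h2
    nlinarith

end

theorem stmt15 (N : ℕ) (σ : ℝ) (hN : 1 ≤ N)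
    (hσ : (N ≤ 4 ∧ 0 < σ) ∨ (5 ≤ N ∧ 0 < σ ∧ 2 * σ + 2 < 2 * (N : ℝ) / ((N : ℝ) - 4))) :
    0 < Iconst N σ ∧
    (∀ u : ℕ → H2 N,
      Tendsto (fun n => rLp (2 * σ + 2) (u n).u) atTop (nhds 1) →
      Tendsto (fun n => Kfun (u n)) atTop (nhds (Iconst N σ)) →
      ∃ (ψ : ℕ → ℕ) (xs : ℕ → Esp N) (U : H2 N), StrictMono ψ ∧
        rLp (2 * σ + 2) U.u = 1 ∧ Kfun U = Iconst N σ ∧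
        H2TendstoTrans (fun k => u (ψ k)) xs U) ∧
    (∀ U : H2 N, rLp (2 * σ + 2) U.u = 1 → Kfun U = Iconst N σ →
      U.pPow σ /
          (rLp 2 U.lapl ^ ((N : ℝ) * σ / 2) * rLp 2 U.u ^ (2 + 2 * σ - (N : ℝ) * σ / 2)) =
        GNconst N σ) := by
  have hp := subC_of hσ
  have h0 : 0 < σ := by rcases hσ with h | h; exacts [h.2, h.2.1]
  refine ⟨Ip_pos hp, fun u h1 h2 => part_one hp u h1 h2, fun U h1 h2 => ?_⟩
  have h := part_two hN hp rfl U h1 h2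
  have e : (2 * σ + 2) * ((N:ℝ) * (1/2 - 1/(2 * σ + 2)) / 2) = (N : ℝ) * σ / 2 := by
    field_simp; ring
  have e2 : (2 * σ + 2) * (1 - (N:ℝ) * (1/2 - 1/(2 * σ + 2)) / 2) = 2 + 2 * σ - (N : ℝ) * σ / 2 := by
    field_simp; ring
  rw [e, e2] at h
  exact h.csSup_eq.symm
end
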